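/- Let d ≥ 3. The connectedness locus C_d := {(c,a) ∈ ℂ^{d−1} : every critical point c_0 = 0, c_1, …, c_{d−2} of P_{c,a} has bounded forward orbit under P_{c,a}} is a compact and connected subset of ℂ^{d−1}. -/

import Mathlib

open Filter Topology MeasureTheory

/-- Elementary symmetric polynomial of degree `m` in the values of `c`. -/
noncomputable def sigmaE {n : ℕ} (c : Fin n → ℂ) (m : ℕ) : ℂ :=
  (Multiset.map c Finset.univ.val).esymm m

/-- The polynomial `P_{c,a}`. -/
noncomputable def Pca (d : ℕ) (c : Fin (d - 2) → ℂ) (a : ℂ) (z : ℂ) : ℂ :=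
  z ^ d / (d : ℂ) +
    (∑ j ∈ Finset.Icc 2 (d - 1), (-1 : ℂ) ^ (d - j) * sigmaE c (d - j) * z ^ j / (j : ℂ)) +
    a ^ d

/-- The critical points `c₀ = 0, c₁, …, c_{d-2}` of `P_{c,a}`. -/
noncomputable def critPt {d : ℕ} (c : Fin (d - 2) → ℂ) (i : Fin (d - 1)) : ℂ :=
  if h : (i : ℕ) = 0 then 0 else c ⟨(i : ℕ) - 1, by have := i.isLt; omega⟩

/-- The orbit of `z` under `P_{c,a}` is bounded. -/
def boundedOrbit (d : ℕ) (c : Fin (d - 2) → ℂ) (a z : ℂ) : Prop :=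
  Bornology.IsBounded (Set.range fun n => (Pca d c a)^[n] z)

/-- The Green function of `P_{c,a}`. -/
noncomputable def green (d : ℕ) (c : Fin (d - 2) → ℂ) (a z : ℂ) : ℝ :=
  limUnder atTop (fun n : ℕ => Real.log (max 1 ‖(Pca d c a)^[n] z‖) / (d : ℝ) ^ n)

/-- `G(c,a)`, the max of the Green function over the critical points. -/
noncomputable def Gmax (d : ℕ) (c : Fin (d - 2) → ℂ) (a : ℂ) : ℝ :=
  ⨆ i : Fin (d - 1), green d c a (critPt c i)

/-- The connectedness locus `C_d`. -/
def connLocus (d : ℕ) : Set ((Fin (d - 2) → ℂ) × ℂ) :=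
  {p | ∀ i : Fin (d - 1), boundedOrbit d p.1 p.2 (critPt p.1 i)}

/-- The filled-in Julia set of `P_{c,a}`. -/
def filledJulia (d : ℕ) (c : Fin (d - 2) → ℂ) (a : ℂ) : Set ℂ :=
  {z | boundedOrbit d c a z}


namespace CL
open Polynomial
set_option linter.all false
set_option linter.unusedSectionVars false
set_option linter.unusedSimpArgs false
set_option linter.unusedVariables false
set_option linter.deprecated false

section Fam
variable {A B : Type*} [CommRing A] [Algebra ℂ A] [CommRing B] [Algebra ℂ B]

noncomputable def antider (f : A[X]) : A[X] :=
  ∑ n ∈ Finset.range (f.natDegree + 1), monomial (n + 1) (f.coeff n * algebraMap ℂ A ((n + 1 : ℂ)⁻¹))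

lemma antider_coeff_succ (f : A[X]) (n : ℕ) :
    (antider f).coeff (n + 1) = f.coeff n * algebraMap ℂ A ((n + 1 : ℂ)⁻¹) := by
  unfold antider
  simp only [finset_sum_coeff, coeff_monomial, add_left_inj, Finset.sum_ite_eq', Finset.mem_range]
  split_ifs with h
  · rfl
  · rw [coeff_eq_zero_of_natDegree_lt (by omega)]; simp

lemma antider_coeff_zero (f : A[X]) : (antider f).coeff 0 = 0 := by
  unfold antider
  simp [finset_sum_coeff, coeff_monomial]

lemma algebraMap_succ_inv (n : ℕ) : algebraMap ℂ A ((n + 1 : ℂ)⁻¹) * ((n : A) + 1) = 1 := by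
  have : ((n : A) + 1) = algebraMap ℂ A (n + 1 : ℂ) := by simp
  rw [this, ← map_mul, inv_mul_cancel₀ (by exact_mod_cast n.succ_ne_zero), map_one]

lemma derivative_antider (f : A[X]) : derivative (antider f) = f := by
  ext n
  rw [coeff_derivative, antider_coeff_succ, mul_assoc, algebraMap_succ_inv, mul_one]

lemma antider_map (φ : A →ₐ[ℂ] B) (f : A[X]) :
    (antider f).map (φ : A →+* B) = antider (f.map (φ : A →+* B)) := by
  ext n
  rcases n with _ | n
  · simp [antider_coeff_zero]
  · simp [antider_coeff_succ]

lemma antider_smul (u : A) (f : A[X]) : antider (C u * f) = C u * antider f := by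
  ext n
  rcases n with _ | n
  · simp [antider_coeff_zero]
  · simp [antider_coeff_succ, mul_assoc]

lemma antider_comp (u : A) (f : A[X]) :
    (antider f).comp (C u * X) = C u * antider (f.comp (C u * X)) := by
  ext n
  rcases n with _ | n
  · simp [antider_coeff_zero, comp_C_mul_X_coeff]
  · simp only [antider_coeff_succ, comp_C_mul_X_coeff, coeff_C_mul]; ring

variable {k : ℕ}

noncomputable def dP (e : ℕ) (q : Option (Fin k) → A) : A[X] :=
  X ^ e * ∏ i : Fin k, (X - C (q (some i)))

noncomputable def PP (d e : ℕ) (q : Option (Fin k) → A) : A[X] :=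
  antider (dP e q) + C (q none ^ d)

def cp (q : Option (Fin k) → A) : Option (Fin k) → A
  | none => 0
  | some i => q (some i)

noncomputable def FF (d e N : ℕ) (q : Option (Fin k) → A) (j : Option (Fin k)) : A :=
  (fun z => (PP d e q).eval z)^[N] (cp q j)

lemma derivative_PP (d e : ℕ) (q : Option (Fin k) → A) : derivative (PP d e q) = dP e q := by
  rw [PP, derivative_add, derivative_antider, derivative_C, add_zero]

lemma eval_zero_PP (d e : ℕ) (q : Option (Fin k) → A) : (PP d e q).eval 0 = q none ^ d := by
  simp [PP, ← coeff_zero_eq_eval_zero, antider_coeff_zero]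

lemma dP_map (φ : A →ₐ[ℂ] B) (e : ℕ) (q : Option (Fin k) → A) :
    (dP e q).map (φ : A →+* B) = dP e (φ ∘ q) := by
  simp [dP, Polynomial.map_prod, Polynomial.map_mul]

lemma PP_map (φ : A →ₐ[ℂ] B) (d e : ℕ) (q : Option (Fin k) → A) :
    (PP d e q).map (φ : A →+* B) = PP d e (φ ∘ q) := by
  simp [PP, antider_map, dP_map]

lemma cp_map (φ : A →ₐ[ℂ] B) (q : Option (Fin k) → A) (j) : φ (cp q j) = cp (φ ∘ q) j := by
  cases j <;> simp [cp]

lemma PP_eval_map (φ : A →ₐ[ℂ] B) (d e : ℕ) (q : Option (Fin k) → A) (z : A) :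
    φ ((PP d e q).eval z) = (PP d e (φ ∘ q)).eval (φ z) := by
  rw [← PP_map, ← AlgHom.coe_toRingHom, eval_map_apply]

lemma FF_map (φ : A →ₐ[ℂ] B) (d e N : ℕ) (q : Option (Fin k) → A) (j) :
    φ (FF d e N q j) = FF d e N (φ ∘ q) j := by
  unfold FF
  rw [← cp_map]
  exact (Function.Semiconj.iterate_right (f := φ) (fun z => PP_eval_map φ d e q z) N) _

lemma dP_comp (u : A) (e : ℕ) (q : Option (Fin k) → A) :
    (dP e (fun j => u * q j)).comp (C u * X) = C (u ^ (e + k)) * dP e q := by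
  simp only [dP, mul_comp, X_pow_comp, prod_comp, sub_comp, X_comp, C_comp]
  have : ∀ i : Fin k, (C u * X - C (u * q (some i)) : A[X]) = C u * (X - C (q (some i))) := by
    intro i; rw [C_mul]; ring
  simp only [this, Finset.prod_mul_distrib, Finset.prod_const, Finset.card_univ, Fintype.card_fin,
    pow_add]
  simp only [C_mul, C_pow, mul_pow]
  ring

lemma PP_homog {d e : ℕ} (hd : d = e + k + 1) (u : A) (q : Option (Fin k) → A) (z : A) :
    (PP d e (fun j => u * q j)).eval (u * z) = u ^ d * (PP d e q).eval z := by
  have h : (PP d e (fun j => u * q j)).comp (C u * X) = C (u ^ d) * PP d e q := by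
    unfold PP
    rw [add_comp, antider_comp, dP_comp, antider_smul, C_comp, mul_add, ← C_mul, mul_pow, ← mul_assoc,
      ← C_mul, hd]
    ring_nf
  have h2 := congrArg (eval z) h
  simpa [eval_comp] using h2

lemma dP_monic (e : ℕ) (q : Option (Fin k) → A) : (dP e q).Monic :=
  (monic_X_pow e).mul (monic_prod_of_monic _ _ fun i _ => monic_X_sub_C _)

lemma dP_natDegree [Nontrivial A] (e : ℕ) (q : Option (Fin k) → A) : (dP e q).natDegree = e + k := by
  rw [dP, (monic_X_pow e).natDegree_mul (monic_prod_of_monic _ _ fun i _ => monic_X_sub_C _),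
    natDegree_prod_of_monic _ _ fun i _ => monic_X_sub_C _]
  simp

lemma PP_natDegree_le [Nontrivial A] {d e : ℕ} (hd : d = e + k + 1) (q : Option (Fin k) → A) :
    (PP d e q).natDegree ≤ d := by
  rw [natDegree_le_iff_coeff_eq_zero]
  intro n hn
  obtain ⟨m, rfl⟩ : ∃ m, n = m + 1 := ⟨n - 1, by omega⟩
  rw [PP, coeff_add, antider_coeff_succ, coeff_C_succ,
    coeff_eq_zero_of_natDegree_lt (by rw [dP_natDegree]; omega)]
  simp

lemma PP_coeff_d [Nontrivial A] {d e : ℕ} (hd : d = e + k + 1) (q : Option (Fin k) → A) :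
    (PP d e q).coeff d = algebraMap ℂ A ((d : ℂ)⁻¹) := by
  subst hd
  rw [PP, coeff_add, antider_coeff_succ, coeff_C_succ, add_zero]
  have := (dP_monic e q).coeff_natDegree
  rw [dP_natDegree] at this
  rw [this]; push_cast; simp

lemma PP_natDegree [Nontrivial A] {d e : ℕ} (hd : d = e + k + 1) (q : Option (Fin k) → A) :
    (PP d e q).natDegree = d := by
  refine natDegree_eq_of_le_of_coeff_ne_zero (PP_natDegree_le hd q) ?_
  rw [PP_coeff_d hd, Ne, FaithfulSMul.algebraMap_eq_zero_iff]
  simp; omega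

lemma PP_zero [Nontrivial A] {d e : ℕ} (hd : d = e + k + 1) :
    PP d e (fun _ : Option (Fin k) => (0 : A)) = C (algebraMap ℂ A ((d : ℂ)⁻¹)) * X ^ d := by
  ext n
  have hdP : dP e (fun _ : Option (Fin k) => (0 : A)) = X ^ (e + k) := by
    simp [dP, pow_add]
  rcases n with _ | n
  · rw [PP, coeff_add, antider_coeff_zero, hd]; simp
  · rw [PP, coeff_add, antider_coeff_succ, hdP, hd]; simp [coeff_X_pow]
    split_ifs with h
    · subst h; push_cast; simp
    · rfl

/-- merging -/
def ext0 (q : Option (Fin k) → A) : Option (Fin (k + 1)) → A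
  | none => q none
  | some i => Fin.cases 0 (fun i => q (some i)) i

lemma PP_ext0 (d e : ℕ) (q : Option (Fin k) → A) : PP d e (ext0 q) = PP d (e + 1) q := by
  simp [PP, dP, ext0, Fin.prod_univ_succ, pow_succ, mul_assoc]

end Fam

section LemZ
variable {K : Type*} [Field K] [Algebra ℂ K] {k : ℕ}

lemma roots_all {P : K[X]} [CharZero K] (hP : 0 < P.natDegree) (hs : (derivative P).Splits)
    (h : ∀ z, (derivative P).IsRoot z → P.IsRoot z) :
    ∀ z z', (derivative P).IsRoot z → (derivative P).IsRoot z' → z = z' := by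
  classical
  have hP0 : P ≠ 0 := by rintro rfl; simp at hP
  have hD0 : derivative P ≠ 0 := by
    intro h0; have := natDegree_eq_zero_of_derivative_eq_zero h0; omega
  have hdeg : (derivative P).natDegree = P.natDegree - 1 := natDegree_derivative P
  have hc : (derivative P).roots.card = P.natDegree - 1 := by
    rw [← hs.natDegree_eq_card_roots, hdeg]
  set S := (derivative P).roots.toFinset with hS
  have h1 : ∑ z ∈ S, (derivative P).rootMultiplicity z = P.natDegree - 1 := by
    rw [← hc, ← Multiset.toFinset_sum_count_eq]; simp [hS]
  have hsub : S ⊆ P.roots.toFinset := by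
    intro z hz
    simp only [hS, Multiset.mem_toFinset, mem_roots hD0] at hz
    simp [hP0]; exact h z hz
  have h2 : ∑ z ∈ S, P.rootMultiplicity z ≤ P.natDegree := by
    calc _ ≤ ∑ z ∈ P.roots.toFinset, P.rootMultiplicity z := Finset.sum_le_sum_of_subset hsub
      _ = P.roots.card := by rw [← Multiset.toFinset_sum_count_eq]; simp
      _ ≤ _ := card_roots' P
  have h3 : ∑ z ∈ S, P.rootMultiplicity z = ∑ z ∈ S, (derivative P).rootMultiplicity z + S.card := by
    rw [Finset.card_eq_sum_ones, ← Finset.sum_add_distrib]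
    refine Finset.sum_congr rfl fun z hz => ?_
    have hz' : P.IsRoot z := h z (by simpa [hS, hD0] using hz)
    rw [derivative_rootMultiplicity_of_root hz']
    have := (rootMultiplicity_pos hP0).2 hz'
    omega
  have h4 : S.card ≤ 1 := by omega
  intro z z' hz hz'
  exact Finset.card_le_one.1 h4 z (by simpa [hS, hD0] using hz) z' (by simpa [hS, hD0] using hz')

lemma isRoot_dP {e : ℕ} (he : 1 ≤ e) (q : Option (Fin k) → K) (z : K) :
    (dP e q).IsRoot z ↔ ∃ j, z = cp q j := by
  simp only [dP, IsRoot.def, eval_mul, eval_pow, eval_X, eval_prod, eval_sub, eval_C, mul_eq_zero,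
    Finset.prod_eq_zero_iff, Finset.mem_univ, true_and, sub_eq_zero, Option.exists, cp]
  rw [pow_eq_zero_iff (by omega)]

lemma lemZ {d e : ℕ} (he : 1 ≤ e) (hd : d = e + k + 1) (q : Option (Fin k) → K)
    (h : ∀ j, (PP d e q).eval (cp q j) = 0) : ∀ j, q j = 0 := by
  have : CharZero K := charZero_of_injective_algebraMap (algebraMap ℂ K).injective
  have hs : (derivative (PP d e q)).Splits := by
    rw [derivative_PP, dP]
    exact (Splits.X_pow e).mul (Splits.prod fun i _ => Splits.X_sub_C _)
  have h1 := roots_all (by rw [PP_natDegree hd]; omega) hs (by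
    intro z hz
    rw [derivative_PP, isRoot_dP he] at hz
    obtain ⟨j, rfl⟩ := hz; exact h j)
  rintro (_ | i)
  · have := h none
    simp only [cp, eval_zero_PP] at this
    exact pow_eq_zero_iff (by omega) |>.1 this
  · have := h1 (cp q (some i)) (cp q none) (by rw [derivative_PP, isRoot_dP he]; exact ⟨_, rfl⟩)
      (by rw [derivative_PP, isRoot_dP he]; exact ⟨_, rfl⟩)
    simpa [cp] using this

end LemZ
end CL

namespace CL
open Polynomial
set_option linter.all false

section Val
variable {K : Type*} [Field K] [Algebra ℂ K] {k : ℕ}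

lemma val_unit (O : ValuationSubring K) [Algebra ℂ O] (z : O) {F : Type*} [Field F] (ψ : O →+* F) (hψ : IsLocalHom ψ)
    (h : ψ z ≠ 0) : O.valuation (z : K) = 1 := by
  rw [← O.valuation_eq_one_iff]
  exact isUnit_of_map_unit ψ z (isUnit_iff_ne_zero.2 h)

lemma val_lemma {d e : ℕ} (he : 1 ≤ e) (hd : d = e + k + 1) (O : ValuationSubring K)
    (hO : ∀ z : ℂ, algebraMap ℂ K z ∈ O) (q : Option (Fin k) → K) {N : ℕ} (hN : 1 ≤ N)
    (hF : ∀ j, FF d e N q j ∈ O) : ∀ j, q j ∈ O := by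
  letI : Algebra ℂ O := ((algebraMap ℂ K).codRestrict O.toSubring hO).toAlgebra
  let φ : O →ₐ[ℂ] K := { O.subtype with commutes' := fun r => rfl }
  let ψ : O →ₐ[ℂ] IsLocalRing.ResidueField O :=
    { IsLocalRing.residue O with commutes' := fun r => rfl }
  have hφ : ∀ z : O, φ z = (z : K) := fun z => rfl
  have hψl : IsLocalHom (ψ : O →+* IsLocalRing.ResidueField O) :=
    inferInstanceAs (IsLocalHom (IsLocalRing.residue O))
  have hψ1 : ∀ z : O, ψ z ≠ 0 → O.valuation (z : K) = 1 := fun z hz =>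
    val_unit O z (ψ : O →+* IsLocalRing.ResidueField O) hψl hz
  have hψ0 : ∀ z : O, O.valuation (z : K) < 1 → ψ z = 0 := fun z hz =>
    (IsLocalRing.residue_eq_zero_iff z).2 ((O.valuation_lt_one_iff z).2 hz)
  by_contra hcon
  push Not at hcon
  obtain ⟨j1, hj1⟩ := hcon
  obtain ⟨j0, hj0⟩ := Finite.exists_max (fun j => O.valuation (q j))
  set u := q j0 with hu
  have hu1 : 1 < O.valuation u := by
    refine lt_of_lt_of_le ?_ (hj0 j1)
    rw [← not_le, O.valuation_le_one_iff]; exact hj1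
  have hu0 : u ≠ 0 := by intro h; rw [h, map_zero] at hu1; exact absurd hu1 (by simp)
  -- scaling
  have hscale : ∀ z : K, z ≠ 0 → (∀ j, O.valuation (q j) ≤ O.valuation z) →
      ∃ t : Option (Fin k) → O, ∀ j, (t j : K) * z = q j := by
    intro z hz h
    have := fun j => (O.valuation_le_iff (q j) z).1 (h j)
    choose t ht using this
    exact ⟨t, ht⟩
  have hbig : ∀ z : K, O.valuation u < O.valuation z →
      O.valuation ((PP d e q).eval z) = O.valuation z ^ d := by
    intro z hz
    have hz0 : z ≠ 0 := by rintro rfl; rw [map_zero] at hz; exact absurd hz (by simp)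
    obtain ⟨t, ht⟩ := hscale z hz0 (fun j => (hj0 j).trans hz.le)
    have hq : q = fun j => z * (φ ∘ t) j := by
      funext j; simp only [Function.comp, hφ]; rw [mul_comm, ht]
    have h1 : (PP d e q).eval z = z ^ d * φ ((PP d e t).eval 1) := by
      rw [PP_eval_map, map_one, ← PP_homog hd, mul_one, ← hq]
    rw [h1, map_mul, map_pow]
    have ht0 : ∀ j, ψ (t j) = 0 := by
      intro j
      apply hψ0
      have h2 := congrArg O.valuation (ht j)
      rw [map_mul] at h2
      by_contra h3
      push Not at h3
      have h4 : O.valuation z ≤ O.valuation (q j) := by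
        rw [← h2]; exact le_mul_of_one_le_left' h3
      exact absurd (h4.trans (hj0 j)) (not_le.2 hz)
    have : O.valuation (φ ((PP d e t).eval 1)) = 1 := by
      apply hψ1
      rw [PP_eval_map]
      have : ψ ∘ t = fun _ => 0 := funext ht0
      rw [this, PP_zero hd]
      rw [eval_mul, eval_C, eval_pow, eval_X, map_one, one_pow, mul_one]
      rw [Ne, FaithfulSMul.algebraMap_eq_zero_iff]
      have : (d : ℂ) ≠ 0 := by exact_mod_cast (by omega : d ≠ 0)
      exact inv_ne_zero this
    rw [this, mul_one]
  have hd2 : 2 ≤ d := by omega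
  have hgt : ∀ g : O.ValueGroup, 1 < g → g < g ^ d := by
    intro g hg
    exact lt_self_pow₀ hg (by omega)
  have hiter : ∀ m : ℕ, ∀ z : K, O.valuation u < O.valuation z →
      O.valuation u < O.valuation ((fun z => (PP d e q).eval z)^[m] z) := by
    intro m
    induction m with
    | zero => intro z hz; exact hz
    | succ m ih =>
      intro z hz
      rw [Function.iterate_succ_apply]
      apply ih
      rw [hbig z hz]
      exact hz.trans (hgt _ (hu1.trans hz))
  obtain ⟨t, ht⟩ := hscale u hu0 hj0
  have hq : q = fun j => u * (φ ∘ t) j := by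
    funext j; simp only [Function.comp, hφ]; rw [mul_comm, ht]
  have : ∃ j, ψ ((PP d e t).eval (cp t j)) ≠ 0 := by
    by_contra hall
    push Not at hall
    have h1 := lemZ he hd (ψ ∘ t) (by
      intro j
      have := hall j
      rwa [PP_eval_map, cp_map] at this)
    have h2 := h1 j0
    have h3 : t j0 = 1 := by
      have := ht j0
      rw [← hu] at this
      have h5 : (t j0 : K) = 1 := mul_right_cancel₀ hu0 (by rw [this, one_mul])
      exact_mod_cast h5
    simp [h3] at h2
  obtain ⟨j, hj⟩ := this
  have h1 : (PP d e q).eval (cp q j) = u ^ d * φ ((PP d e t).eval (cp t j)) := by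
    rw [PP_eval_map, ← PP_homog hd, ← hq, cp_map]
    congr 1
    cases j with
    | none => simp [cp]
    | some i => simp [cp, hφ]; rw [mul_comm, ht]
  have h2 : O.valuation u < O.valuation ((PP d e q).eval (cp q j)) := by
    rw [h1, map_mul, map_pow]
    have := hψ1 _ hj
    rw [← hφ] at this
    rw [this, mul_one]
    exact hgt _ hu1
  have h3 := hiter (N - 1) _ h2
  have h4 := hF j
  obtain ⟨m, rfl⟩ : ∃ m, N = m + 1 := ⟨N - 1, by omega⟩
  rw [FF, Function.iterate_succ_apply, ← O.valuation_le_one_iff] at h4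
  exact absurd (h3.trans_le h4) (not_lt.2 hu1.le)

end Val

section Integ
variable {k : ℕ}

noncomputable def FM (k d e N : ℕ) (j : Option (Fin k)) : MvPolynomial (Option (Fin k)) ℂ :=
  FF d e N (fun j => MvPolynomial.X j) j

lemma eval_FM (d e N : ℕ) (q : Option (Fin k) → ℂ) (j) :
    MvPolynomial.eval q (FM k d e N j) = FF d e N q j := by
  have := FF_map (MvPolynomial.aeval q) d e N (fun j : Option (Fin k) => (MvPolynomial.X j : MvPolynomial _ ℂ)) j
  rw [FM]
  simpa [Function.comp_def, MvPolynomial.aeval_eq_eval] using this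

lemma FM_integral {d e : ℕ} (he : 1 ≤ e) (hd : d = e + k + 1) {N : ℕ} (hN : 1 ≤ N) :
    ∀ b : MvPolynomial (Option (Fin k)) ℂ, IsIntegral (Algebra.adjoin ℂ (Set.range (FM k d e N))) b := by
  set B := MvPolynomial (Option (Fin k)) ℂ
  let K := FractionRing B
  set R := Algebra.adjoin ℂ (Set.range (FM k d e N)) with hR
  suffices h : ∀ j : Option (Fin k), IsIntegral R (MvPolynomial.X j : B) by
    intro b
    induction b using MvPolynomial.induction_on with
    | C a => exact isIntegral_algebraMap (R := R) (A := B) (x := algebraMap ℂ R a)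
    | add p q hp hq => exact hp.add hq
    | mul_X p i hp => exact hp.mul (h i)
  intro j
  have hinj : Function.Injective (IsScalarTower.toAlgHom R B K) := IsFractionRing.injective B K
  rw [← isIntegral_algHom_iff (IsScalarTower.toAlgHom R B K) hinj]
  set s : Set K := algebraMap B K '' (R : Set B) with hs
  have hmem : algebraMap B K (MvPolynomial.X j) ∈ (integralClosure (Subring.closure s) K).toSubring := by
    rw [← iInf_valuationSubring_superset, Subring.mem_iInf]
    rintro ⟨V, hV⟩
    have := val_lemma he hd V (fun z => hV (by
        refine ⟨algebraMap ℂ B z, R.algebraMap_mem z, ?_⟩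
        exact (IsScalarTower.algebraMap_apply ℂ B K z).symm)) (fun j => algebraMap B K (MvPolynomial.X j)) hN (by
      intro j
      have h1 := FF_map (IsScalarTower.toAlgHom ℂ B K) d e N (fun j => (MvPolynomial.X j : B)) j
      have h2 : FF d e N (fun j => algebraMap B K (MvPolynomial.X j)) j = algebraMap B K (FM k d e N j) := by
        rw [FM]; exact h1.symm
      rw [h2]
      exact hV ⟨_, Algebra.subset_adjoin ⟨j, rfl⟩, rfl⟩)
    exact this j
  have hmem2 : IsIntegral (Subring.closure s) (algebraMap B K (MvPolynomial.X j)) := hmem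
  have hcl : Subring.closure s = (R.toSubring.map (algebraMap B K)) := by
    apply le_antisymm
    · rw [Subring.closure_le]; rintro _ ⟨x, hx, rfl⟩; exact ⟨x, hx, rfl⟩
    · rintro _ ⟨x, hx, rfl⟩; exact Subring.subset_closure ⟨x, hx, rfl⟩
  rw [hcl] at hmem2
  obtain ⟨p, hp, hp0⟩ := hmem2
  -- push the polynomial back to R
  let ι : R →+* (R.toSubring.map (algebraMap B K)) :=
    { toFun := fun r => ⟨algebraMap B K r, ⟨r, r.2, rfl⟩⟩
      map_one' := by ext; simp
      map_mul' := by intro a b; ext; simp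
      map_zero' := by ext; simp
      map_add' := by intro a b; ext; simp }
  have hsurj : Function.Surjective ι := by
    rintro ⟨_, ⟨x, hx, rfl⟩⟩
    exact ⟨⟨x, hx⟩, rfl⟩
  obtain ⟨p', hp', -, hp'm⟩ := lifts_and_degree_eq_and_monic (p := p) (f := ι) ((mem_lifts p).2 (map_surjective ι hsurj p)) hp
  refine ⟨p', hp'm, ?_⟩
  rw [← hp', eval₂_map] at hp0
  exact hp0

end Integ
end CL

namespace CL
open Polynomial
set_option linter.all false

lemma prod_norm_ge (t : ℂ) {ε : ℝ} (hε : 0 < ε) (s : Multiset ℂ) :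
    (∀ r ∈ s, ε ≤ ‖t - r‖) → ε ^ s.card ≤ ‖(s.map (fun r => t - r)).prod‖ := by
  induction s using Multiset.induction_on with
  | empty => intro _; simp
  | cons a s ih =>
    intro h
    rw [Multiset.map_cons, Multiset.prod_cons, norm_mul, Multiset.card_cons, pow_succ, mul_comm]
    have h1 := h a (Multiset.mem_cons_self a s)
    have h2 := ih (fun r hr => h r (Multiset.mem_cons_of_mem hr))
    gcongr

lemma eval_eq_prod {f : ℂ[X]} (hf : f.Monic) (t : ℂ) :
    f.eval t = (f.roots.map (fun r => t - r)).prod := by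
  have hs : f.Splits := IsAlgClosed.splits f
  conv_lhs => rw [hs.eq_prod_roots_of_monic hf]
  rw [eval_multiset_prod]; simp [Multiset.map_map]

lemma card_roots_C (f : ℂ[X]) : f.roots.card = f.natDegree :=
  (IsAlgClosed.splits f).natDegree_eq_card_roots.symm

lemma exists_root_near {f : ℂ[X]} (hf : f.Monic) {t : ℂ} {ε : ℝ} (hε : 0 < ε)
    (h : ‖f.eval t‖ < ε ^ f.natDegree) : ∃ r, f.IsRoot r ∧ ‖t - r‖ < ε := by
  by_contra hcon
  push Not at hcon
  have := prod_norm_ge t hε f.roots (fun r hr => hcon r (isRoot_of_mem_roots hr))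
  rw [← eval_eq_prod hf, card_roots_C] at this
  linarith

lemma lying {σ : Type} [Fintype σ] {R : Type} [CommRing R] [IsDomain R] [IsIntegrallyClosed R]
    [Algebra R (MvPolynomial σ ℂ)] [Module.IsTorsionFree R (MvPolynomial σ ℂ)]
    (hint : ∀ b : MvPolynomial σ ℂ, IsIntegral R b) (ev : R →+* ℂ) (hs : Function.Surjective ev)
    (g : MvPolynomial σ ℂ) (τ : ℂ) (hτ : ((minpoly R g).map ev).IsRoot τ) :
    ∃ x : σ → ℂ, ∀ P : R[X], P.eval₂ ev τ = 0 → MvPolynomial.eval x (aeval g P) = 0 := by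
  let θ : R[X] →+* ℂ := eval₂RingHom ev τ
  have hθs : Function.Surjective θ := by
    intro z
    obtain ⟨r, hr⟩ := hs z
    exact ⟨C r, by simp [θ, hr]⟩
  have hmax : (RingHom.ker θ).IsMaximal := RingHom.ker_isMaximal_of_surjective θ hθs
  letI alg : Algebra R[X] (MvPolynomial σ ℂ) := (aeval g : R[X] →ₐ[R] (MvPolynomial σ ℂ)).toRingHom.toAlgebra
  have halg : ∀ P : R[X], algebraMap R[X] (MvPolynomial σ ℂ) P = aeval g P := fun P => rfl
  have : IsScalarTower R R[X] (MvPolynomial σ ℂ) := IsScalarTower.of_algebraMap_eq (fun r => by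
    rw [halg]; simp)
  have hI : Algebra.IsIntegral R[X] (MvPolynomial σ ℂ) := ⟨fun b => (hint b).tower_top⟩
  have hker : RingHom.ker (algebraMap R[X] (MvPolynomial σ ℂ)) ≤ RingHom.ker θ := by
    have := minpoly.ker_eval (hint g)
    show RingHom.ker (aeval g : R[X] →ₐ[R] (MvPolynomial σ ℂ)).toRingHom ≤ _
    rw [this, Ideal.span_singleton_le_iff_mem, RingHom.mem_ker]
    rw [IsRoot.def, eval_map] at hτ
    exact hτ
  obtain ⟨Q, hQ, hQP⟩ := Ideal.exists_ideal_over_maximal_of_isIntegral (RingHom.ker θ) hker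
  obtain ⟨x, rfl⟩ := MvPolynomial.isMaximal_iff_eq_vanishingIdeal_singleton.1 hQ
  refine ⟨x, ?_⟩
  intro P hP
  have : P ∈ RingHom.ker θ := hP
  rw [← hQP, Ideal.mem_comap, MvPolynomial.mem_vanishingIdeal_singleton_iff] at this
  exact this

section Opn
variable {σ : Type} [Fintype σ] (F : σ → MvPolynomial σ ℂ)

lemma algInd (hint : ∀ b : MvPolynomial σ ℂ, IsIntegral (Algebra.adjoin ℂ (Set.range F)) b) :
    AlgebraicIndependent ℂ F := by
  have : Algebra.IsAlgebraic (Algebra.adjoin ℂ (Set.range F)) (MvPolynomial σ ℂ) :=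
    ⟨fun b => (hint b).isAlgebraic⟩
  refine (Algebra.IsAlgebraic.isTranscendenceBasis_of_le_trdeg_of_finite ℂ F ?_).1
  rw [MvPolynomial.trdeg_of_isDomain]; simp

noncomputable def fm (q : σ → ℂ) : σ → ℂ := fun j => MvPolynomial.eval q (F j)

lemma fm_continuous : Continuous (fm F) :=
  continuous_pi fun j => MvPolynomial.continuous_eval (F j)

set_option maxHeartbeats 1000000 in
theorem open_lemma (hint : ∀ b : MvPolynomial σ ℂ, IsIntegral (Algebra.adjoin ℂ (Set.range F)) b)
    (p : σ → ℂ) (hb : ∃ M : ℝ, ∀ᶠ y in 𝓝 (fm F p), ∀ x, fm F x = y → ‖x‖ ≤ M)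
    (U : Set (σ → ℂ)) (hU : U ∈ 𝓝 p) : fm F '' U ∈ 𝓝 (fm F p) := by
  classical
  have hind := algInd F hint
  set R := Algebra.adjoin ℂ (Set.range F) with hR
  let B := MvPolynomial σ ℂ
  have hic : IsIntegrallyClosed R := IsIntegrallyClosed.of_equiv hind.aevalEquiv.toRingEquiv
  let ev : (σ → ℂ) → (R →ₐ[ℂ] ℂ) := fun y => (MvPolynomial.aeval y).comp (hind.aevalEquiv.symm : R →ₐ[ℂ] B)
  have hevc : ∀ r : R, Continuous (fun y => ev y r) := fun r =>
    MvPolynomial.continuous_eval (hind.aevalEquiv.symm r)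
  have hFm : ∀ j, F j ∈ R := fun j => Algebra.subset_adjoin ⟨j, rfl⟩
  have hevF : ∀ y j, ev y ⟨F j, hFm j⟩ = y j := by
    intro y j
    have : hind.aevalEquiv.symm ⟨F j, hFm j⟩ = MvPolynomial.X j := by
      rw [AlgEquiv.symm_apply_eq]
      apply Subtype.ext
      have := hind.algebraMap_aevalEquiv (MvPolynomial.X j)
      rw [MvPolynomial.aeval_X] at this
      exact this.symm
    show MvPolynomial.aeval y (hind.aevalEquiv.symm ⟨F j, hFm j⟩) = _
    rw [this]; simp
  have hevq : ∀ q, ∀ r : R, ev (fm F q) r = MvPolynomial.eval q (r : B) := by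
    intro q r
    have h1 : (r : B) = MvPolynomial.aeval F (hind.aevalEquiv.symm r) := by
      rw [← hind.algebraMap_aevalEquiv, AlgEquiv.apply_symm_apply]; rfl
    show MvPolynomial.aeval (fm F q) (hind.aevalEquiv.symm r) = _
    rw [h1]
    generalize hind.aevalEquiv.symm r = P
    induction P using MvPolynomial.induction_on with
    | C a => simp
    | add p q hp hq => simp only [map_add, hp, hq]
    | mul_X p i hp => rw [map_mul, map_mul, map_mul, hp]; simp [fm]
  -- the value of g is a root
  have hroot : ∀ (g : B) (q : σ → ℂ), ((minpoly R g).map (ev (fm F q) : R →+* ℂ)).IsRoot (MvPolynomial.eval q g) := by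
    intro g q
    have h1 := congrArg (MvPolynomial.eval q) (minpoly.aeval R g)
    rw [map_zero, aeval_def, hom_eval₂] at h1
    rw [IsRoot.def, eval_map, ← h1]
    congr 1
    ext r; exact hevq q r
  have hLO : ∀ (g : B) (y : σ → ℂ) (τ : ℂ), ((minpoly R g).map (ev y : R →+* ℂ)).IsRoot τ →
      ∃ x, fm F x = y ∧ MvPolynomial.eval x g = τ := by
    intro g y τ hτ
    obtain ⟨x, key⟩ := lying hint (ev y : R →+* ℂ) (fun z => ⟨algebraMap ℂ R z, by simp⟩) g τ hτ
    refine ⟨x, ?_, ?_⟩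
    · funext j
      have := key (C ⟨F j, hFm j⟩ - C (algebraMap ℂ R (y j))) (by
        simp only [eval₂_sub, eval₂_C]
        have := hevF y j
        simp only [AlgHom.coe_toRingHom, RingHom.coe_coe, this, AlgHom.commutes]; simp)
      rw [map_sub, aeval_C, aeval_C, map_sub, sub_eq_zero] at this
      refine Eq.trans ?_ (this.trans ?_)
      · rfl
      · show MvPolynomial.eval x (MvPolynomial.C (y j)) = y j
        simp
    · have := key (X - C (algebraMap ℂ R τ)) (by
        simp only [eval₂_sub, eval₂_C, eval₂_X]
        simp)
      rw [map_sub, aeval_C, aeval_X, map_sub, sub_eq_zero] at this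
      refine this.trans ?_
      show MvPolynomial.eval x (MvPolynomial.C τ) = τ
      simp
  -- choose g
  let S : σ → Finset ℂ := fun i => ((minpoly R (MvPolynomial.X i : B)).map (ev (fm F p) : R →+* ℂ)).roots.toFinset
  have hmon : ∀ (g : B) y, ((minpoly R g).map (ev y : R →+* ℂ)).Monic := fun g y =>
    (minpoly.monic (hint g)).map _
  have hS : ∀ q, fm F q = fm F p → ∀ i, q i ∈ S i := by
    intro q hq i
    have := hroot (MvPolynomial.X i) q
    rw [hq, MvPolynomial.eval_X] at this
    simp only [S, Multiset.mem_toFinset]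
    exact (mem_roots (hmon _ _).ne_zero).2 this
  let g : B := 1 - ∏ i, ∏ s ∈ (S i).erase (p i), (MvPolynomial.C (p i - s)⁻¹ * (MvPolynomial.X i - MvPolynomial.C s))
  have hg : ∀ q, MvPolynomial.eval q g = 1 - ∏ i, ∏ s ∈ (S i).erase (p i), ((p i - s)⁻¹ * (q i - s)) := by
    intro q; simp only [g, map_sub, map_one, map_prod, map_mul, MvPolynomial.eval_C, MvPolynomial.eval_X]
  have hgp : MvPolynomial.eval p g = 0 := by
    rw [hg, sub_eq_zero, Finset.prod_eq_one]
    intro i _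
    apply Finset.prod_eq_one
    intro s hs
    exact inv_mul_cancel₀ (sub_ne_zero.2 (Finset.ne_of_mem_erase hs).symm)
  have hgq : ∀ q, fm F q = fm F p → q ≠ p → MvPolynomial.eval q g ≠ 0 := by
    intro q hq hqp
    obtain ⟨i, hi⟩ := Function.ne_iff.1 hqp
    rw [hg, Finset.prod_eq_zero (Finset.mem_univ i)
      (Finset.prod_eq_zero (Finset.mem_erase.2 ⟨hi, hS q hq i⟩) (by simp))]
    simp
  obtain ⟨M, hM⟩ := hb
  -- compactness
  let h : (σ → ℂ) → ℝ := fun x => ‖fm F x - fm F p‖ + ‖MvPolynomial.eval x g‖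
  have hhc : Continuous h :=
    ((fm_continuous F).sub continuous_const).norm.add (MvPolynomial.continuous_eval g).norm
  have hcomp : IsCompact (Metric.closedBall (0 : σ → ℂ) M \ interior U) :=
    (isCompact_closedBall 0 M).diff isOpen_interior
  have hδ : ∃ δ > 0, ∀ x ∈ Metric.closedBall (0 : σ → ℂ) M \ interior U, δ ≤ h x := by
    rcases (Metric.closedBall (0 : σ → ℂ) M \ interior U).eq_empty_or_nonempty with he | hne
    · exact ⟨1, one_pos, by rw [he]; simp⟩
    · obtain ⟨x0, hx0, hmin⟩ := hcomp.exists_isMinOn hne hhc.continuousOn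
      refine ⟨h x0, ?_, fun x hx => hmin hx⟩
      have h0 : 0 ≤ h x0 := by positivity
      refine lt_of_le_of_ne h0 (fun h1 => ?_)
      have h2 : ‖fm F x0 - fm F p‖ = 0 := by
        have := norm_nonneg (fm F x0 - fm F p); have := norm_nonneg (MvPolynomial.eval x0 g)
        simp only [h] at h1; linarith
      have h3 : ‖MvPolynomial.eval x0 g‖ = 0 := by
        have := norm_nonneg (fm F x0 - fm F p); have := norm_nonneg (MvPolynomial.eval x0 g)
        simp only [h] at h1; linarith
      rw [norm_eq_zero, sub_eq_zero] at h2
      rw [norm_eq_zero] at h3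
      by_cases h4 : x0 = p
      · subst h4; exact hx0.2 (mem_interior_iff_mem_nhds.2 hU)
      · exact hgq x0 h2 h4 h3
  obtain ⟨δ, hδ0, hδ⟩ := hδ
  set n := (minpoly R g).natDegree with hn
  have hc0 : Continuous (fun y => ((minpoly R g).map (ev y : R →+* ℂ)).eval 0) := by
    simp only [← coeff_zero_eq_eval_zero, coeff_map]
    exact hevc _
  have hsmall : ∀ᶠ y in 𝓝 (fm F p), ‖((minpoly R g).map (ev y : R →+* ℂ)).eval 0‖ < (δ / 2) ^ n := by
    have h1 : ‖((minpoly R g).map (ev (fm F p) : R →+* ℂ)).eval 0‖ < (δ / 2) ^ n := by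
      have := hroot g p
      rw [hgp, IsRoot.def] at this
      rw [this, norm_zero]; positivity
    exact hc0.norm.continuousAt.eventually_lt continuousAt_const h1
  have hnear : ∀ᶠ y in 𝓝 (fm F p), ‖y - fm F p‖ < δ / 2 := by
    have : ContinuousAt (fun y => ‖y - fm F p‖) (fm F p) := by fun_prop
    exact this.eventually_lt continuousAt_const (by simp; positivity)
  filter_upwards [hM, hsmall, hnear] with y hy1 hy2 hy3
  obtain ⟨τ, hτ, hτ2⟩ := exists_root_near (hmon g y) (t := 0) (half_pos hδ0) (by
    rw [(minpoly.monic (hint g)).natDegree_map]; exact hy2)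
  obtain ⟨x, hx, hxg⟩ := hLO g y τ hτ
  refine ⟨x, ?_, hx⟩
  by_contra hxU
  have := hδ x ⟨by simpa using hy1 x hx, fun hi => hxU (interior_subset hi)⟩
  simp only [h, hx, hxg] at this
  rw [zero_sub, norm_neg] at hτ2
  linarith

end Opn
end CL

namespace CL
open Polynomial
set_option linter.all false

section Cov
variable {D : ℕ}

noncomputable def pol (a : Fin D → ℂ) : ℂ[X] := X ^ D + ∑ i : Fin D, C (a i) * X ^ (i : ℕ)

lemma pol_sum_degree (a : Fin D → ℂ) : (∑ i : Fin D, C (a i) * X ^ (i : ℕ) : ℂ[X]).degree < D := by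
  rw [← Finset.sum_attach]
  exact lt_of_le_of_lt (degree_sum_le _ _) ((Finset.sup_lt_iff (WithBot.bot_lt_coe _)).2 fun i _ =>
    lt_of_le_of_lt (degree_C_mul_X_pow_le _ _) (by exact_mod_cast i.1.2))

lemma pol_monic (a : Fin D → ℂ) : (pol a).Monic := monic_X_pow_add (pol_sum_degree a)

lemma pol_natDegree (a : Fin D → ℂ) : (pol a).natDegree = D :=
  natDegree_eq_of_degree_eq_some (by
    rw [pol, degree_add_eq_left_of_degree_lt]
    · simp
    · rw [degree_X_pow]; exact pol_sum_degree a)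

lemma pol_eval (a : Fin D → ℂ) (y : ℂ) : (pol a).eval y = y ^ D + ∑ i : Fin D, a i * y ^ (i : ℕ) := by
  simp [pol, eval_finset_sum]

lemma pol_eval_cont : Continuous (fun x : (Fin D → ℂ) × ℂ => (pol x.1).eval x.2) := by
  simp only [pol_eval]; fun_prop

lemma pol_root_bound (a : Fin D → ℂ) (y : ℂ) (h : (pol a).IsRoot y) : ‖y‖ ≤ 1 + ∑ i, ‖a i‖ := by
  by_contra hcon
  push Not at hcon
  have hs : 0 ≤ ∑ i, ‖a i‖ := Finset.sum_nonneg fun i _ => norm_nonneg _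
  have h1 : 1 ≤ ‖y‖ := by linarith
  rcases Nat.eq_zero_or_pos D with h0 | hD
  · subst h0
    rw [IsRoot.def, pol_eval] at h; simp at h
  rw [IsRoot.def, pol_eval] at h
  have h2 : y ^ D = - ∑ i : Fin D, a i * y ^ (i : ℕ) := by linear_combination h
  have h3 : ‖y‖ ^ D ≤ (∑ i, ‖a i‖) * ‖y‖ ^ (D - 1) := by
    rw [← norm_pow, h2, norm_neg, Finset.sum_mul]
    refine (norm_sum_le _ _).trans (Finset.sum_le_sum fun i _ => ?_)
    rw [norm_mul, norm_pow]
    gcongr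
    have := i.2; omega
  have h4 : ‖y‖ ^ D = ‖y‖ * ‖y‖ ^ (D - 1) := by rw [← pow_succ']; congr 1; omega
  rw [h4] at h3
  have h5 : 0 < ‖y‖ ^ (D - 1) := by positivity
  have := le_of_mul_le_mul_right h3 h5
  linarith

abbrev EE (D : ℕ) := {x : (Fin D → ℂ) × ℂ // (pol x.1).IsRoot x.2}

lemma EE_closed : IsClosed {x : (Fin D → ℂ) × ℂ | (pol x.1).IsRoot x.2} :=
  isClosed_singleton.preimage pol_eval_cont

def prE (x : EE D) : Fin D → ℂ := x.1.1

lemma prE_cont : Continuous (prE (D := D)) := continuous_fst.comp continuous_subtype_val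

lemma prE_proper : IsProperMap (prE (D := D)) := by
  rw [isProperMap_iff_isCompact_preimage]
  refine ⟨prE_cont, fun K hK => ?_⟩
  obtain ⟨M, hM⟩ := (hK.image (f := fun a : Fin D → ℂ => 1 + ∑ i, ‖a i‖) (by fun_prop)).bddAbove
  have hc : IsCompact ((K ×ˢ Metric.closedBall (0 : ℂ) M) ∩ {x : (Fin D → ℂ) × ℂ | (pol x.1).IsRoot x.2}) :=
    (hK.prod (isCompact_closedBall _ _)).inter_right EE_closed
  rw [Subtype.isCompact_iff]
  convert hc using 1
  ext ⟨a, y⟩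
  constructor
  · rintro ⟨⟨⟨a', y'⟩, h⟩, h', h2⟩
    simp only [Prod.mk.injEq] at h2
    obtain ⟨rfl, rfl⟩ := h2
    refine ⟨⟨h', ?_⟩, h⟩
    simp only [Metric.mem_closedBall, dist_zero_right]
    exact (pol_root_bound _ _ h).trans (hM ⟨_, h', rfl⟩)
  · rintro ⟨⟨h1, _⟩, h2⟩
    exact ⟨⟨(a, y), h2⟩, h1, rfl⟩

lemma prE_open : IsOpenMap (prE (D := D)) := by
  rw [isOpenMap_iff_nhds_le]
  rintro ⟨⟨a, y⟩, h⟩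
  intro s hs
  rw [mem_map, nhds_subtype_eq_comap, mem_comap] at hs
  obtain ⟨u, hu, hus⟩ := hs
  obtain ⟨v, hv, w, hw, hvw⟩ := mem_nhds_prod_iff.1 hu
  obtain ⟨ε, hε, hεw⟩ := Metric.mem_nhds_iff.1 hw
  have hc : ContinuousAt (fun a' : Fin D → ℂ => ‖(pol a').eval y‖) a :=
    (pol_eval_cont.comp (by fun_prop : Continuous fun a' : Fin D → ℂ => (a', y))).norm.continuousAt
  have h1 : ∀ᶠ a' in 𝓝 a, ‖(pol a').eval y‖ < ε ^ D :=
    hc.eventually_lt continuousAt_const (by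
      have h' : (pol a).eval y = 0 := h
      rw [h', norm_zero]; positivity)
  filter_upwards [h1, hv] with a' ha' hav
  obtain ⟨r, hr, hr2⟩ := exists_root_near (pol_monic a') (t := y) hε (by rw [pol_natDegree]; exact ha')
  have : (⟨(a', r), hr⟩ : EE D) ∈ prE ⁻¹' s := hus (hvw ⟨hav, hεw (by
    rw [Metric.mem_ball, dist_comm, dist_eq_norm]; exact hr2)⟩)
  exact this

noncomputable def hfac (a : Fin D → ℂ) (y z : ℂ) : ℂ :=
  (∑ i ∈ Finset.range D, y ^ i * z ^ (D - 1 - i)) +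
    ∑ j : Fin D, a j * ∑ i ∈ Finset.range (j : ℕ), y ^ i * z ^ ((j : ℕ) - 1 - i)

lemma hfac_eq (a : Fin D → ℂ) (y z : ℂ) : (pol a).eval y - (pol a).eval z = hfac a y z * (y - z) := by
  rw [pol_eval, pol_eval, hfac, add_mul, (Commute.all y z).geom_sum₂_mul, Finset.sum_mul]
  have : ∀ j : Fin D, (a j * ∑ i ∈ Finset.range (j : ℕ), y ^ i * z ^ ((j : ℕ) - 1 - i)) * (y - z)
      = a j * y ^ (j : ℕ) - a j * z ^ (j : ℕ) := by
    intro j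
    rw [mul_assoc, (Commute.all y z).geom_sum₂_mul, mul_sub]
  rw [Finset.sum_congr rfl fun j _ => this j, Finset.sum_sub_distrib]
  ring

lemma hfac_diag (a : Fin D → ℂ) (y : ℂ) : hfac a y y = (derivative (pol a)).eval y := by
  have hc : Continuous (fun z => hfac a y z) := by unfold hfac; fun_prop
  have h1 := ((pol a).hasDerivAt y).tendsto_slope
  have h2 : Tendsto (fun z => hfac a y z) (𝓝[≠] y) (𝓝 (hfac a y y)) := (hc.tendsto y).mono_left inf_le_left
  refine tendsto_nhds_unique (h2.congr' ?_) h1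
  filter_upwards [self_mem_nhdsWithin] with z hz
  have hz' : z ≠ y := hz
  rw [slope_def_field, eq_div_iff (sub_ne_zero.2 hz')]
  have := hfac_eq a y z
  linear_combination this

def sepS (D : ℕ) : Set (Fin D → ℂ) := {a | (pol a).Separable}

lemma sep_deriv {f : ℂ[X]} (hf : f.Separable) {y : ℂ} (hy : f.IsRoot y) : (derivative f).eval y ≠ 0 := by
  have := hf.eval₂_derivative_ne_zero (RingHom.id ℂ) (x := y) (by simpa [eval₂_id] using hy)
  simpa [eval₂_id] using this

lemma prE_localHomeo : IsLocalHomeomorphOn (prE (D := D)) (prE ⁻¹' sepS D) := by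
  apply IsLocalHomeomorphOn.mk
  rintro ⟨⟨a, y⟩, h⟩ hs
  have hs' : (pol a).Separable := hs
  have hne := sep_deriv hs' h
  rw [← hfac_diag] at hne
  have hc : Continuous (fun x : ((Fin D → ℂ) × ℂ) × ℂ => hfac x.1.1 x.1.2 x.2) := by unfold hfac; fun_prop
  have hev : ∀ᶠ x in 𝓝 ((a, y), y), hfac x.1.1 x.1.2 x.2 ≠ 0 := hc.continuousAt.eventually_ne hne
  obtain ⟨v, hv, w, hw, hvw⟩ := mem_nhds_prod_iff.1 hev
  have hW : {x : EE D | x.1 ∈ interior v ∧ x.1.2 ∈ interior w} ∈ 𝓝 (⟨(a, y), h⟩ : EE D) ∧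
      IsOpen {x : EE D | x.1 ∈ interior v ∧ x.1.2 ∈ interior w} := by
    have ho : IsOpen {x : EE D | x.1 ∈ interior v ∧ x.1.2 ∈ interior w} :=
      (isOpen_interior.preimage continuous_subtype_val).inter
        (isOpen_interior.preimage (continuous_snd.comp continuous_subtype_val))
    exact ⟨ho.mem_nhds ⟨mem_interior_iff_mem_nhds.2 hv, mem_interior_iff_mem_nhds.2 hw⟩, ho⟩
  set W := {x : EE D | x.1 ∈ interior v ∧ x.1.2 ∈ interior w} with hWdef
  have hinj : Set.InjOn (prE (D := D)) W := by
    rintro ⟨⟨b, z⟩, hz⟩ ⟨h1, h2⟩ ⟨⟨b', z'⟩, hz'⟩ ⟨h1', h2'⟩ hbb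
    have hb : b = b' := hbb
    subst hb
    have h3 := hfac_eq b z z'
    rw [IsRoot.def] at hz hz'
    simp only at hz hz'
    rw [hz, hz', sub_zero] at h3
    have h4 : hfac b z z' ≠ 0 := hvw (Set.mk_mem_prod (interior_subset h1) (interior_subset h2'))
    have h5 : z - z' = 0 := by
      rcases mul_eq_zero.1 h3.symm with h | h
      · exact absurd h h4
      · exact h
    rw [sub_eq_zero] at h5
    subst h5; rfl
  have : Nonempty (EE D) := ⟨⟨(a, y), h⟩⟩
  refine ⟨OpenPartialHomeomorph.ofContinuousOpen (hinj.toPartialEquiv _ _) prE_cont.continuousOn prE_open hW.2,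
    mem_of_mem_nhds hW.1, fun x _ => rfl⟩

lemma prE_covOn : IsCoveringMapOn (prE (D := D)) (sepS D) := by
  refine prE_proper.isClosedMap.isCoveringMapOn_of_isLocalHomeomorphOn ?_ prE_localHomeo
  intro a _
  refine Set.Finite.of_finite_image (f := fun x : EE D => x.1.2)
    (((pol a).roots.toFinset.finite_toSet).subset ?_) ?_
  · rintro _ ⟨⟨⟨b, z⟩, hz⟩, hb, rfl⟩
    have hb' : b = a := hb
    subst hb'
    simp only [Finset.mem_coe, Multiset.mem_toFinset]
    exact (mem_roots (pol_monic b).ne_zero).2 hz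
  · rintro ⟨⟨b, z⟩, hz⟩ h1 ⟨⟨b', z'⟩, hz'⟩ h2 h3
    have hb : b = a := h1
    have hb' : b' = a := h2
    have h3' : z = z' := h3
    subst hb; subst hb'; subst h3'; rfl

lemma prE_cov : IsCoveringMap ((sepS D).restrictPreimage (prE (D := D))) :=
  prE_covOn.isCoveringMap_restrictPreimage

lemma roots_near (a : Fin D → ℂ) {ε : ℝ} (hε : 0 < ε) :
    ∀ᶠ b in 𝓝 a, ∀ y, (pol b).IsRoot y → ∃ r, (pol a).IsRoot r ∧ ‖y - r‖ < ε := by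
  have hcl : IsClosed {x : EE D | ∀ r, (pol a).IsRoot r → ε ≤ ‖x.1.2 - r‖} := by
    simp only [Set.setOf_forall]
    refine isClosed_iInter fun r => isClosed_iInter fun _ => isClosed_le continuous_const ?_
    fun_prop
  have h1 := prE_proper.isClosedMap _ hcl
  have h2 : a ∉ prE '' {x : EE D | ∀ r, (pol a).IsRoot r → ε ≤ ‖x.1.2 - r‖} := by
    rintro ⟨⟨⟨b, z⟩, hz⟩, h, hb⟩
    have hb' : b = a := hb
    subst hb'
    have := h z hz
    simp at this; linarith
  filter_upwards [h1.isOpen_compl.mem_nhds h2] with b hb y hy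
  by_contra hcon
  push Not at hcon
  exact hb ⟨⟨(b, y), hy⟩, hcon, rfl⟩

end Cov
end CL

namespace CL
open Polynomial
set_option linter.all false

section RS
variable {D : ℕ} {T : Type*} [TopologicalSpace T]

lemma root_exist (a : T × ℝ → Fin D → ℂ) (ha : Continuous a)
    (hs : ∀ t, ∀ s ∈ Set.Ico (0 : ℝ) 1, (pol (a (t, s))).Separable) (y0 : T → ℂ) (hy0 : Continuous y0)
    (hr : ∀ t, (pol (a (t, 0))).IsRoot (y0 t)) :
    ∃ Y : T × ℝ → ℂ, ContinuousOn Y (Set.univ ×ˢ Set.Ico (0 : ℝ) 1) ∧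
      (∀ t, ∀ s ∈ Set.Ico (0 : ℝ) 1, (pol (a (t, s))).IsRoot (Y (t, s))) ∧ ∀ t, Y (t, 0) = y0 t := by
  classical
  let J := Set.Ico (0 : ℝ) 1
  have h0J : (0 : ℝ) ∈ J := ⟨le_rfl, one_pos⟩
  have hmem : ∀ (u : unitInterval) (θ : J), (u : ℝ) * (θ : ℝ) ∈ J := fun u θ =>
    ⟨mul_nonneg u.2.1 θ.2.1, lt_of_le_of_lt (mul_le_of_le_one_left θ.2.1 u.2.2) θ.2.2⟩
  let H : C(unitInterval × (T × Set.Ico (0 : ℝ) 1), sepS D) :=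
    ⟨fun x => ⟨a (x.2.1, (x.1 : ℝ) * (x.2.2 : ℝ)), hs _ _ (hmem _ _)⟩,
      Continuous.subtype_mk (ha.comp (by fun_prop)) _⟩
  let f : C((T × Set.Ico (0 : ℝ) 1), prE (D := D) ⁻¹' sepS D) :=
    ⟨fun x => ⟨⟨(a (x.1, 0), y0 x.1), hr _⟩, hs _ _ h0J⟩,
      Continuous.subtype_mk (Continuous.subtype_mk ((ha.comp (by fun_prop)).prodMk (hy0.comp continuous_fst)) _) _⟩
  have H0 : ∀ x, H (0, x) = (sepS D).restrictPreimage (prE (D := D)) (f x) := by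
    intro x
    apply Subtype.ext
    show a (x.1, ((0 : unitInterval) : ℝ) * (x.2 : ℝ)) = a (x.1, 0)
    simp
  let G := prE_cov.liftHomotopy H f H0
  have hG : ∀ u x, prE (G (u, x)).1 = a (x.1, (u : ℝ) * (x.2 : ℝ)) := by
    intro u x
    have := congr_fun (prE_cov.liftHomotopy_lifts H f H0) (u, x)
    exact congrArg Subtype.val this
  have hG0 : ∀ x, G (0, x) = f x := prE_cov.liftHomotopy_zero H f H0
  let y : (T × Set.Ico (0 : ℝ) 1) → ℂ := fun x => (G (1, x)).1.1.2
  have hyc : Continuous y := by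
    have : Continuous fun x : (T × Set.Ico (0 : ℝ) 1) => G (1, x) := G.continuous.comp (by fun_prop)
    exact continuous_snd.comp (continuous_subtype_val.comp (continuous_subtype_val.comp this))
  have hyr : ∀ x : (T × Set.Ico (0 : ℝ) 1), (pol (a (x.1, x.2))).IsRoot (y x) := by
    intro x
    have h1 := (G (1, x)).1.2
    have h2 := hG 1 x
    simp only [Set.Icc.coe_one, one_mul] at h2
    rw [← h2]; exact h1
  have hy0' : ∀ t, y (t, ⟨0, h0J⟩) = y0 t := by
    intro t
    have hcst := prE_cov.const_of_comp (A := unitInterval) (g := fun u => G (u, (t, ⟨0, h0J⟩)))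
      (G.continuous.comp (by fun_prop)) (by
        intro u u'
        apply Subtype.ext
        have h1 := hG u (t, ⟨0, h0J⟩)
        have h2 := hG u' (t, ⟨0, h0J⟩)
        simp only [mul_zero] at h1 h2
        exact h1.trans h2.symm) 1 0
    show (G (1, (t, ⟨0, h0J⟩))).1.1.2 = _
    have h3 : G (1, (t, ⟨0, h0J⟩)) = G (0, (t, ⟨0, h0J⟩)) := hcst
    rw [h3, hG0]; rfl
  refine ⟨fun x => if h : x.2 ∈ J then y (x.1, ⟨x.2, h⟩) else 0, ?_, ?_, ?_⟩
  · rw [continuousOn_iff_continuous_restrict]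
    have : Continuous fun x : (Set.univ ×ˢ Set.Ico (0 : ℝ) 1 : Set (T × ℝ)) => y (x.1.1, ⟨x.1.2, x.2.2⟩) :=
      hyc.comp (by fun_prop)
    convert this using 1
    funext x
    have : x.1.2 ∈ J := x.2.2
    simp [Set.restrict, this]
  · intro t s hs
    have : s ∈ J := hs
    simp only [this, dif_pos]
    exact hyr (t, ⟨s, this⟩)
  · intro t
    simp only [h0J, dif_pos]
    exact hy0' t

lemma root_unique (a : ℝ → Fin D → ℂ) (ha : Continuous a)
    (hs : ∀ s ∈ Set.Ico (0 : ℝ) 1, (pol (a s)).Separable) (y z : ℝ → ℂ)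
    (hy : ContinuousOn y (Set.Ico 0 1)) (hz : ContinuousOn z (Set.Ico 0 1))
    (hyr : ∀ s ∈ Set.Ico (0 : ℝ) 1, (pol (a s)).IsRoot (y s))
    (hzr : ∀ s ∈ Set.Ico (0 : ℝ) 1, (pol (a s)).IsRoot (z s)) {s : ℝ} (hsJ : s ∈ Set.Ico (0 : ℝ) 1)
    (h : y s = z s) : y 0 = z 0 := by
  let J := Set.Ico (0 : ℝ) 1
  have : PreconnectedSpace J := Subtype.preconnectedSpace isPreconnected_Ico
  have h0J : (0 : ℝ) ∈ J := ⟨le_rfl, one_pos⟩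
  let g : ∀ y : ℝ → ℂ, (∀ s ∈ Set.Ico (0 : ℝ) 1, (pol (a s)).IsRoot (y s)) → J → prE (D := D) ⁻¹' sepS D :=
    fun y hyr s => ⟨⟨(a s, y s), hyr s s.2⟩, hs s s.2⟩
  have hg : ∀ y hyr, ContinuousOn y (Set.Ico 0 1) → Continuous (g y hyr) := by
    intro y hyr hy
    exact Continuous.subtype_mk (Continuous.subtype_mk ((ha.comp continuous_subtype_val).prodMk
      (continuousOn_iff_continuous_restrict.1 hy)) _) _
  have := prE_cov.eq_of_comp_eq (hg y hyr hy) (hg z hzr hz) (by funext s; rfl) ⟨s, hsJ⟩ (by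
    apply Subtype.ext; apply Subtype.ext
    exact Prod.ext rfl h)
  have h2 := congr_fun this ⟨0, h0J⟩
  exact congrArg (fun x => x.1.1.2) h2

lemma disc_sep (P : ℂ[X]) (hP : P ≠ 0) : ∃ ε > 0, ∀ r r', P.IsRoot r → P.IsRoot r' → r ≠ r' → 2 * ε ≤ ‖r - r'‖ := by
  classical
  let S := (P.roots.toFinset ×ˢ P.roots.toFinset).filter (fun x => x.1 ≠ x.2)
  rcases S.eq_empty_or_nonempty with h | h
  · refine ⟨1, one_pos, fun r r' hr hr' hne => ?_⟩
    have : (r, r') ∈ S := by simp [S, hP, hne]; exact ⟨hr, hr'⟩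
    rw [h] at this; simp at this
  · obtain ⟨x, hx, hmin⟩ := S.exists_min_image (fun x => ‖x.1 - x.2‖) h
    have hx' := (Finset.mem_filter.1 hx).2
    refine ⟨‖x.1 - x.2‖ / 2, by have := norm_pos_iff.2 (sub_ne_zero.2 hx'); positivity, fun r r' hr hr' hne => ?_⟩
    have : (r, r') ∈ S := by simp [S, hP, hne]; exact ⟨hr, hr'⟩
    have := hmin _ this
    simp only at this
    linarith

lemma root_limit (a : T × ℝ → Fin D → ℂ) (ha : Continuous a) (Y : T × ℝ → ℂ)
    (hY : ContinuousOn Y (Set.univ ×ˢ Set.Ico (0 : ℝ) 1))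
    (hr : ∀ t, ∀ s ∈ Set.Ico (0 : ℝ) 1, (pol (a (t, s))).IsRoot (Y (t, s))) (t : T) :
    ∃ r, Tendsto Y (𝓝[Set.univ ×ˢ Set.Ico (0 : ℝ) 1] (t, 1)) (𝓝 r) := by
  have hpn := (pol_monic (a (t, 1))).ne_zero
  obtain ⟨ε0, hε0, hsep⟩ := disc_sep _ hpn
  -- key
  have key : ∀ ε, 0 < ε → ε ≤ ε0 → ∃ r, (pol (a (t, 1))).IsRoot r ∧
      ∀ᶠ x in 𝓝[Set.univ ×ˢ Set.Ico (0 : ℝ) 1] (t, 1), ‖Y x - r‖ < ε := by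
    intro ε hε hεε
    have h1 : ∀ᶠ x in 𝓝 (t, (1 : ℝ)), ∀ y, (pol (a x)).IsRoot y →
        ∃ r, (pol (a (t, 1))).IsRoot r ∧ ‖y - r‖ < ε :=
      ha.continuousAt.eventually (roots_near (a (t, 1)) hε)
    obtain ⟨V, hV, W, hW, hVW⟩ := mem_nhds_prod_iff.1 h1
    obtain ⟨η, hη, hηW⟩ := Metric.mem_nhds_iff.1 hW
    set l := max 0 (1 - η) with hl
    have hl1 : l < 1 := max_lt one_pos (by linarith)
    have hin : ∀ s ∈ Set.Ioo l 1, s ∈ Set.Ico (0 : ℝ) 1 ∧ s ∈ W := by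
      intro s hs
      have h2 : 0 ≤ l := le_max_left _ _
      have h3 : 1 - η ≤ l := le_max_right _ _
      refine ⟨⟨by linarith [hs.1], hs.2⟩, hηW ?_⟩
      rw [Metric.mem_ball, Real.dist_eq, abs_lt]
      constructor <;> linarith [hs.1, hs.2]
    set s1 := (l + 1) / 2 with hs1
    have hs1I : s1 ∈ Set.Ioo l 1 := ⟨by rw [hs1]; linarith, by rw [hs1]; linarith⟩
    have htV : t ∈ V := mem_of_mem_nhds hV
    have hcov : ∀ t' ∈ V, ∀ s ∈ Set.Ioo l 1, ∃ r, (pol (a (t, 1))).IsRoot r ∧ ‖Y (t', s) - r‖ < ε := by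
      intro t' ht' s hs
      exact hVW (Set.mk_mem_prod ht' (hin s hs).2) _ (hr t' s (hin s hs).1)
    obtain ⟨r, hrr, hrd⟩ := hcov t htV s1 hs1I
    refine ⟨r, hrr, ?_⟩
    have hc1 : Continuous fun t' => Y (t', s1) := by
      have : Continuous ((fun t' : T => (t', s1))) := by fun_prop
      exact hY.comp_continuous this (fun t' => ⟨trivial, (hin s1 hs1I).1⟩)
    have h2 : ∀ᶠ t' in 𝓝 t, ‖Y (t', s1) - r‖ < ε :=
      ((hc1.sub continuous_const).norm.continuousAt).eventually_lt continuousAt_const hrd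
    have h3 : ∀ t' ∈ V, ‖Y (t', s1) - r‖ < ε → ∀ s ∈ Set.Ioo l 1, ‖Y (t', s) - r‖ < ε := by
      intro t' ht' hd
      have hpre : IsPreconnected ((fun s => Y (t', s)) '' Set.Ioo l 1) := by
        apply isPreconnected_Ioo.image
        have : Continuous (fun s : ℝ => (t', s)) := by fun_prop
        exact hY.comp this.continuousOn (fun s hs => ⟨trivial, (hin s hs).1⟩)
      have := hpre.subset_left_of_subset_union (u := Metric.ball r ε)
        (v := ⋃ r' ∈ {r' | (pol (a (t, 1))).IsRoot r' ∧ r' ≠ r}, Metric.ball r' ε) Metric.isOpen_ball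
        (isOpen_biUnion fun _ _ => Metric.isOpen_ball) (by
          rw [Set.disjoint_iUnion₂_right]
          rintro r' ⟨h1, h2⟩
          apply Metric.ball_disjoint_ball
          rw [dist_eq_norm]
          have := hsep r r' hrr h1 (Ne.symm h2)
          linarith) (by
          rintro _ ⟨s, hs, rfl⟩
          obtain ⟨r', h1, h2⟩ := hcov t' ht' s hs
          by_cases h : r' = r
          · left; rw [Metric.mem_ball, dist_eq_norm, ← h]; exact h2
          · right; simp only [Set.mem_iUnion]; exact ⟨r', ⟨h1, h⟩, by rw [Metric.mem_ball, dist_eq_norm]; exact h2⟩)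
        ⟨Y (t', s1), Set.mem_image_of_mem (fun s => Y (t', s)) hs1I, (by rw [Metric.mem_ball, dist_eq_norm]; exact hd : Y (t', s1) ∈ Metric.ball r ε)⟩
      intro s hs
      have := this (Set.mem_image_of_mem (fun s => Y (t', s)) hs)
      rwa [Metric.mem_ball, dist_eq_norm] at this
    have h4 : ∀ᶠ x in 𝓝 (t, (1 : ℝ)), (x.1 ∈ V ∧ ‖Y (x.1, s1) - r‖ < ε) ∧ l < x.2 := by
      refine Eventually.and ?_ ?_
      · exact (continuous_fst.tendsto (t, (1:ℝ))).eventually (p := fun t' => t' ∈ V ∧ ‖Y (t', s1) - r‖ < ε) (Filter.Eventually.and hV h2)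
      · exact continuous_snd.continuousAt.eventually (lt_mem_nhds hl1)
    filter_upwards [mem_nhdsWithin_of_mem_nhds h4, self_mem_nhdsWithin] with x hx hx2
    exact h3 x.1 hx.1.1 hx.1.2 x.2 ⟨hx.2, hx2.2.2⟩
  have hne : (𝓝[Set.univ ×ˢ Set.Ico (0 : ℝ) 1] (t, (1 : ℝ))).NeBot := by
    rw [← mem_closure_iff_nhdsWithin_neBot, closure_prod_eq, closure_Ico (by norm_num)]
    simp
  obtain ⟨r, hrr, hrd⟩ := key ε0 hε0 le_rfl
  refine ⟨r, ?_⟩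
  rw [Metric.tendsto_nhds]
  intro ε hε
  obtain ⟨r', hr'r, hr'd⟩ := key (min ε ε0) (lt_min hε hε0) (min_le_right _ _)
  have : r' = r := by
    by_contra hcon
    obtain ⟨x, h1, h2⟩ := (hrd.and hr'd).exists
    have h3 := hsep r r' hrr hr'r (Ne.symm hcon)
    have h4 : ‖r - r'‖ ≤ ‖Y x - r‖ + ‖Y x - r'‖ := by
      have : r - r' = (Y x - r') - (Y x - r) := by ring
      rw [this]; linarith [norm_sub_le (Y x - r') (Y x - r)]
    have h5 := min_le_right ε ε0
    linarith
  subst this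
  filter_upwards [hr'd] with x hx
  rw [dist_eq_norm]
  exact lt_of_lt_of_le hx (min_le_left _ _)

theorem root_section (a : T × ℝ → Fin D → ℂ) (ha : Continuous a)
    (hs : ∀ t, ∀ s ∈ Set.Ico (0 : ℝ) 1, (pol (a (t, s))).Separable) (y0 : T → ℂ) (hy0 : Continuous y0)
    (hr : ∀ t, (pol (a (t, 0))).IsRoot (y0 t)) :
    ∃ Y : T × ℝ → ℂ, ContinuousOn Y (Set.univ ×ˢ Set.Icc (0 : ℝ) 1) ∧
      (∀ t, ∀ s ∈ Set.Ico (0 : ℝ) 1, (pol (a (t, s))).IsRoot (Y (t, s))) ∧ ∀ t, Y (t, 0) = y0 t := by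
  obtain ⟨Y, hYc, hYr, hY0⟩ := root_exist a ha hs y0 hy0 hr
  set A : Set (T × ℝ) := Set.univ ×ˢ Set.Ico (0 : ℝ) 1
  have hex : ∀ x ∈ (Set.univ ×ˢ Set.Icc (0 : ℝ) 1 : Set (T × ℝ)), ∃ r, Tendsto Y (𝓝[A] x) (𝓝 r) := by
    rintro ⟨t, s⟩ ⟨-, h1, h2⟩
    rcases eq_or_lt_of_le h2 with h | h
    · simp only at h; subst h
      exact root_limit a ha Y hYc hYr t
    · exact ⟨_, hYc _ ⟨trivial, h1, h⟩⟩
  have hcl : (Set.univ ×ˢ Set.Icc (0 : ℝ) 1 : Set (T × ℝ)) ⊆ closure A := by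
    rw [closure_prod_eq, closure_Ico (by norm_num), closure_univ]
  have heq : ∀ x ∈ A, extendFrom A Y x = Y x := by
    intro x hx
    exact extendFrom_eq (subset_closure hx) (hYc x hx)
  refine ⟨extendFrom A Y, continuousOn_extendFrom hcl hex, ?_, ?_⟩
  · intro t s hs
    rw [heq (t, s) ⟨trivial, hs⟩]; exact hYr t s hs
  · intro t
    rw [heq (t, 0) ⟨trivial, le_rfl, one_pos⟩]; exact hY0 t

end RS
end CL

namespace CL
open Polynomial
set_option linter.all false

section LAM
variable {D : ℕ} {S : Type*} [TopologicalSpace S]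

noncomputable def acf (D : ℕ) (q : ℂ[X]) (τ : ℂ) : Fin D → ℂ :=
  fun i => q.coeff i * τ ^ (D - (i : ℕ)) - if (i : ℕ) = 0 then 1 else 0

lemma sum_delta (hD : 1 ≤ D) (y : ℂ) : ∑ i : Fin D, (if (i : ℕ) = 0 then (1:ℂ) else 0) * y ^ (i : ℕ) = 1 := by
  obtain ⟨n, rfl⟩ : ∃ n, D = n + 1 := ⟨D - 1, by omega⟩
  rw [Fin.sum_univ_succ]; simp

lemma acf_eval (hD : 1 ≤ D) (q : ℂ[X]) (τ y : ℂ) :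
    (pol (acf D q τ)).eval y = y ^ D + (∑ i : Fin D, q.coeff i * τ ^ (D - (i : ℕ)) * y ^ (i : ℕ)) - 1 := by
  rw [pol_eval]
  simp only [acf, sub_mul, Finset.sum_sub_distrib]
  rw [sum_delta hD]; ring

lemma acf_eval_mul (hD : 1 ≤ D) (q : ℂ[X]) (hq : q.Monic) (hqd : q.natDegree = D) (τ z : ℂ) :
    (pol (acf D q τ)).eval (τ * z) = τ ^ D * q.eval z - 1 := by
  rw [acf_eval hD, eval_eq_sum_range, hqd, Finset.sum_range_succ]
  have : q.coeff D = 1 := by rw [← hqd]; exact hq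
  rw [this, mul_add, Finset.mul_sum, ← Fin.sum_univ_eq_sum_range (fun i => τ ^ D * (q.coeff i * z ^ i))]
  have h : ∀ i : Fin D, q.coeff i * τ ^ (D - (i : ℕ)) * (τ * z) ^ (i : ℕ) = τ ^ D * (q.coeff i * z ^ (i : ℕ)) := by
    intro i
    have : τ ^ D = τ ^ (D - (i : ℕ)) * τ ^ (i : ℕ) := by rw [← pow_add]; congr 1; omega
    rw [this]; ring
  rw [Finset.sum_congr rfl fun i _ => h i]; ring

lemma acf_rot (hD : 1 ≤ D) (q : ℂ[X]) (τ η y : ℂ) (hη : η ^ D = 1) :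
    (pol (acf D q τ)).eval (η * y) = (pol (acf D q (τ / η))).eval y := by
  have h0 : η ≠ 0 := by rintro rfl; rw [zero_pow (by omega)] at hη; exact zero_ne_one hη
  rw [acf_eval hD, acf_eval hD, mul_pow, hη, one_mul]
  congr 2
  apply Finset.sum_congr rfl
  intro i _
  have : η ^ (D - (i : ℕ)) * η ^ (i : ℕ) = 1 := by rw [← pow_add, ← hη]; congr 1; omega
  rw [div_pow, mul_pow]
  field_simp
  linear_combination (q.coeff i * τ ^ (D - (i:ℕ)) * y ^ (i:ℕ)) * this

lemma acf_sep (hD : 1 ≤ D) (q : ℂ[X]) (hq : q.Monic) (hqd : q.natDegree = D) {ρ : ℝ} (hρ : 0 < ρ)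
    (hcrit : ∀ z, (derivative q).IsRoot z → ‖q.eval z‖ ≤ ρ ^ D) (τ : ℂ) (hτ : ‖τ‖ * ρ < 1) :
    (pol (acf D q τ)).Separable := by
  rw [separable_def, isCoprime_iff_aeval_ne_zero_of_isAlgClosed ℂ ℂ]
  intro y
  by_contra! hcon
  obtain ⟨h1, h2⟩ := hcon
  simp only [coe_aeval_eq_eval] at h1 h2
  by_cases h0 : τ = 0
  · subst h0
    have hp : pol (acf D q 0) = X ^ D - 1 := by
      apply Polynomial.funext; intro x
      rw [acf_eval hD]
      have : ∀ i : Fin D, q.coeff i * 0 ^ (D - (i : ℕ)) * x ^ (i : ℕ) = 0 := by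
        intro i; rw [zero_pow (by omega)]; ring
      simp [this]
    rw [hp] at h1 h2
    rw [derivative_sub, derivative_one, sub_zero, derivative_X_pow] at h2
    simp at h1 h2
    rcases h2 with h2 | h2
    · omega
    · rw [h2.1, zero_pow (by omega)] at h1; norm_num at h1
  · obtain ⟨z, rfl⟩ : ∃ z, y = τ * z := ⟨y / τ, by field_simp⟩
    have hpe : (pol (acf D q τ)).comp (C τ * X) = C (τ ^ D) * q - 1 := by
      apply Polynomial.funext; intro x
      rw [eval_comp]; simp only [eval_mul, eval_C, eval_X, eval_sub, eval_one]
      exact acf_eval_mul hD q hq hqd τ x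
    have hd := congrArg (fun f => (derivative f).eval z) hpe
    simp only [derivative_comp, eval_mul, derivative_mul, eval_comp] at hd
    simp only [derivative_C, derivative_X, eval_add, eval_mul, eval_C, eval_X, eval_zero, eval_one, derivative_sub, derivative_one, derivative_mul, eval_sub] at hd
    rw [h2] at hd
    have hz : (derivative q).IsRoot z := by
      have h3 : τ ^ D ≠ 0 := pow_ne_zero _ h0
      have : τ ^ D * (derivative q).eval z = 0 := by linear_combination -hd
      exact (mul_eq_zero.1 this).resolve_left h3
    have h4 := hcrit z hz
    rw [acf_eval_mul hD q hq hqd] at h1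
    have h5 : ‖τ ^ D * q.eval z‖ = 1 := by
      rw [sub_eq_zero.1 h1]; simp
    rw [norm_mul, norm_pow] at h5
    have h6 : (‖τ‖ * ρ) ^ D < 1 := pow_lt_one₀ (by positivity) hτ (by omega)
    rw [mul_pow] at h6
    have : ‖τ‖ ^ D * ‖q.eval z‖ ≤ ‖τ‖ ^ D * ρ ^ D := by gcongr
    linarith

theorem lam_exists (hD : 1 ≤ D) (Q : S → ℂ[X]) (hQ : ∀ p, (Q p).Monic) (hQd : ∀ p, (Q p).natDegree = D)
    (hQc : ∀ i, Continuous fun p => (Q p).coeff i) {ρ : ℝ} (hρ : 0 < ρ)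
    (hcrit : ∀ p z, (derivative (Q p)).IsRoot z → ‖(Q p).eval z‖ ≤ ρ ^ D) :
    ∃ lam : S × ℂ → ℂ, ContinuousOn lam (Set.univ ×ˢ Metric.sphere 0 ρ) ∧
      ∀ p w, ‖w‖ = ρ → ∏ η ∈ nthRootsFinset D (1 : ℂ), (X - C (lam (p, η * w))) = Q p - C (w ^ D) := by
  classical
  have hw0 : ∀ w : Metric.sphere (0:ℂ) ρ, (w : ℂ) ≠ 0 := fun w h => by
    have := w.2; rw [mem_sphere_zero_iff_norm, h, norm_zero] at this; exact hρ.ne this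
  let a : (S × Metric.sphere (0:ℂ) ρ) × ℝ → Fin D → ℂ := fun x => acf D (Q x.1.1) ((x.2 : ℂ) / (x.1.2 : ℂ))
  have ha : Continuous a := by
    refine continuous_pi fun i => ?_
    simp only [a, acf]
    refine Continuous.sub (Continuous.mul ((hQc i).comp (by fun_prop)) (Continuous.pow (Continuous.div ?_ ?_ ?_) _)) continuous_const
    · fun_prop
    · fun_prop
    · intro x; exact hw0 _
  have hsep : ∀ t, ∀ s ∈ Set.Ico (0 : ℝ) 1, (pol (a (t, s))).Separable := by
    rintro ⟨p, w⟩ s hs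
    refine acf_sep hD _ (hQ p) (hQd p) hρ (hcrit p) _ ?_
    have : ‖(w : ℂ)‖ = ρ := by simpa using w.2
    simp only
    rw [norm_div, this, Complex.norm_real, Real.norm_eq_abs, abs_of_nonneg hs.1, div_mul_cancel₀ _ hρ.ne']
    exact hs.2
  obtain ⟨Y, hYc, hYr, hY0⟩ := root_section a ha hsep (fun _ => 1) continuous_const (by
    rintro ⟨p, w⟩
    rw [IsRoot]; simp only [a]
    rw [acf_eval hD]
    have : ∀ i : Fin D, (Q p).coeff i * (((0:ℝ):ℂ) / (w:ℂ)) ^ (D - (i : ℕ)) * 1 ^ (i : ℕ) = 0 := by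
      intro i; rw [Complex.ofReal_zero, zero_div, zero_pow (by omega)]; ring
    simp only [this]; simp)
  -- product formula
  have hYcs : ∀ t, ContinuousOn (fun s => Y (t, s)) (Set.Icc 0 1) := fun t =>
    hYc.comp (by fun_prop) (fun s hs => ⟨trivial, hs⟩)
  have hηn : ∀ η ∈ nthRootsFinset D (1 : ℂ), η ^ D = 1 := fun η hη => (mem_nthRootsFinset (by omega) _).1 hη
  have hn1 : ∀ η : ℂ, η ^ D = 1 → ‖η‖ = 1 := fun η hη => Complex.norm_eq_one_of_pow_eq_one hη (by omega)
  let rw' : ℂ → Metric.sphere (0:ℂ) ρ → Metric.sphere (0:ℂ) ρ := fun η w =>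
    if h : η ^ D = 1 then ⟨η * w, by rw [mem_sphere_zero_iff_norm, norm_mul, hn1 η h, one_mul]; simpa using w.2⟩ else w
  have hrw : ∀ η w, η ^ D = 1 → ((rw' η w : Metric.sphere (0:ℂ) ρ) : ℂ) = η * w := by
    intro η w h; simp only [rw', dif_pos h]
  have hroot : ∀ p w η, η ^ D = 1 → ∀ s ∈ Set.Ico (0:ℝ) 1, (pol (a ((p, w), s))).IsRoot (η * Y ((p, rw' η w), s)) := by
    intro p w η hη s hs
    have := hYr (p, rw' η w) s hs
    rw [IsRoot] at this ⊢
    simp only [a] at this ⊢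
    rw [acf_rot hD _ _ _ _ hη, div_div, mul_comm (w:ℂ) η, ← hrw η w hη]
    exact this
  have hprod : ∀ p w, ∀ s ∈ Set.Ico (0:ℝ) 1, ∏ η ∈ nthRootsFinset D (1 : ℂ), (X - C (η * Y ((p, rw' η w), s))) = pol (a ((p, w), s)) := by
    intro p w s hs
    symm
    apply Polynomial.eq_of_monic_of_dvd_of_natDegree_le
    · exact monic_prod_of_monic _ _ fun _ _ => monic_X_sub_C _
    · exact pol_monic _
    · apply Finset.prod_dvd_of_coprime
      · intro η hη η' hη' hne
        refine isCoprime_X_sub_C_of_isUnit_sub (IsUnit.mk0 _ (sub_ne_zero.2 ?_))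
        intro h
        apply hne
        have hη := hηn η hη
        have hη' := hηn η' hη'
        have := root_unique (fun s => a ((p, w), s)) (ha.comp (by fun_prop)) (hsep (p, w))
          (fun s => η * Y ((p, rw' η w), s)) (fun s => η' * Y ((p, rw' η' w), s))
          (continuousOn_const.mul ((hYcs _).mono Set.Ico_subset_Icc_self))
          (continuousOn_const.mul ((hYcs _).mono Set.Ico_subset_Icc_self))
          (hroot p w η hη) (hroot p w η' hη') hs h
        simpa [hY0] using this
      · intro η hη
        exact dvd_iff_isRoot.2 (hroot p w η (hηn η hη) s hs)
    · rw [pol_natDegree, natDegree_prod_of_monic _ _ fun _ _ => monic_X_sub_C _]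
      simp only [natDegree_X_sub_C, Finset.sum_const, smul_eq_mul, mul_one]
      rw [(Complex.isPrimitiveRoot_exp D (by omega)).card_nthRootsFinset]
  have hprod1 : ∀ p w x, ∏ η ∈ nthRootsFinset D (1 : ℂ), (x - (η * Y ((p, rw' η w), 1))) = (pol (a ((p, w), 1))).eval x := by
    intro p w x
    have hcl : Set.EqOn (fun s => ∏ η ∈ nthRootsFinset D (1 : ℂ), (x - (η * Y ((p, rw' η w), s))))
        (fun s => (pol (a ((p, w), s))).eval x) (Set.Icc 0 1) := by
      refine Set.EqOn.of_subset_closure (s := Set.Ico 0 1) ?_ ?_ ?_ Set.Ico_subset_Icc_self ?_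
      · intro s hs
        have := congrArg (eval x) (hprod p w s hs)
        simpa [eval_prod] using this
      · exact continuousOn_finset_prod _ fun η _ => continuousOn_const.sub (continuousOn_const.mul (hYcs _))
      · refine Continuous.continuousOn ?_
        exact pol_eval_cont.comp ((ha.comp (by fun_prop)).prodMk continuous_const)
      · rw [closure_Ico (by norm_num)]
    exact hcl ⟨zero_le_one, le_rfl⟩
  let lam : S × ℂ → ℂ := fun x => if h : x.2 ∈ Metric.sphere (0:ℂ) ρ then x.2 * Y ((x.1, ⟨x.2, h⟩), 1) else 0
  refine ⟨lam, ?_, ?_⟩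
  · rw [continuousOn_iff_continuous_restrict]
    have h1 : Continuous fun t : S × Metric.sphere (0:ℂ) ρ => Y (t, 1) :=
      hYc.comp_continuous (by fun_prop) (fun t => ⟨trivial, zero_le_one, le_rfl⟩)
    have : Continuous fun x : (Set.univ ×ˢ Metric.sphere 0 ρ : Set (S × ℂ)) => x.1.2 * Y ((x.1.1, ⟨x.1.2, x.2.2⟩), 1) := by
      refine Continuous.mul (by fun_prop) (h1.comp ?_)
      exact Continuous.prodMk (by fun_prop) (Continuous.subtype_mk (by fun_prop) _)
    convert this using 1
    funext x
    have : x.1.2 ∈ Metric.sphere (0:ℂ) ρ := x.2.2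
    show lam x.1 = _
    simp only [lam, dif_pos this]
  · intro p w hw
    apply Polynomial.funext
    intro x
    have hws : w ∈ Metric.sphere (0:ℂ) ρ := by simpa using hw
    have hwn := hw0 ⟨w, hws⟩
    simp only at hwn
    rw [eval_prod]
    have h1 := hprod1 p ⟨w, hws⟩ (w⁻¹ * x)
    have h2 := acf_eval_mul hD (Q p) (hQ p) (hQd p) w⁻¹ x
    have h3 : (pol (a ((p, ⟨w, hws⟩), 1))).eval (w⁻¹ * x) = w⁻¹ ^ D * (Q p).eval x - 1 := by
      rw [← h2]; simp [a]
    rw [h3] at h1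
    have h4 : ∀ η ∈ nthRootsFinset D (1:ℂ), eval x (X - C (lam (p, η * w))) = w * (w⁻¹ * x - η * Y ((p, rw' η ⟨w, hws⟩), 1)) := by
      intro η hη
      have h5 := hrw η ⟨w, hws⟩ (hηn η hη)
      have h6 : η * w ∈ Metric.sphere (0:ℂ) ρ := by rw [← h5]; exact (rw' η ⟨w, hws⟩).2
      have h7 : rw' η ⟨w, hws⟩ = ⟨η * w, h6⟩ := Subtype.ext h5
      rw [h7]
      simp only [eval_sub, eval_X, eval_C, lam, dif_pos h6]
      field_simp
    rw [Finset.prod_congr rfl h4, Finset.prod_mul_distrib, h1, Finset.prod_const,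
      (Complex.isPrimitiveRoot_exp D (by omega)).card_nthRootsFinset]
    simp only [eval_sub, eval_C, eval_pow]
    rw [mul_sub, ← mul_assoc, ← mul_pow, mul_inv_cancel₀ hwn]; ring

end LAM
end CL

namespace CL
open Polynomial
set_option linter.all false

section LC
variable {D : ℕ} {S : Type*} [TopologicalSpace S]

def IsLam (D : ℕ) (ρ : ℝ) (Q : S → ℂ[X]) (lam : S × ℂ → ℂ) : Prop :=
  ContinuousOn lam (Set.univ ×ˢ Metric.sphere 0 ρ) ∧
      ∀ p w, ‖w‖ = ρ → ∏ η ∈ nthRootsFinset D (1 : ℂ), (X - C (lam (p, η * w))) = Q p - C (w ^ D)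

lemma lam_count {ρ : ℝ} {Q : S → ℂ[X]} {lam : S × ℂ → ℂ} (h : IsLam D ρ Q lam) (p : S) (w : ℂ)
    (hw : ‖w‖ = ρ) (c : ℂ) :
    ((nthRootsFinset D (1 : ℂ)).filter (fun η => lam (p, η * w) = c)).card = (Q p - C (w ^ D)).rootMultiplicity c := by
  classical
  rw [← h.2 p w hw, ← count_roots]
  have : (∏ η ∈ nthRootsFinset D (1 : ℂ), (X - C (lam (p, η * w)))) =
      (((nthRootsFinset D (1 : ℂ)).val.map (fun η => lam (p, η * w))).map (fun a => X - C a)).prod := by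
    rw [Multiset.map_map]; rfl
  rw [this, roots_multiset_prod_X_sub_C, Multiset.count_map, Finset.card_def, Finset.filter_val]
  congr 1
  apply Multiset.filter_congr
  intro x _; exact eq_comm

lemma norm_of_pow (hD : 1 ≤ D) {ρ : ℝ} (hρ : 0 < ρ) {w v : ℂ} (h : w ^ D = v) (hv : ‖v‖ = ρ ^ D) : ‖w‖ = ρ := by
  rw [← h, norm_pow] at hv
  exact (pow_left_inj₀ (norm_nonneg _) hρ.le (by omega)).1 hv

lemma lam_rot_cont (hD : 1 ≤ D) {ρ : ℝ} {Q : S → ℂ[X]} {lam : S × ℂ → ℂ} (h : IsLam D ρ Q lam) (p : S) (w : ℂ)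
    (hw : ‖w‖ = ρ) (η : ℂ) (hη : η ^ D = 1) :
    ContinuousWithinAt (fun x : S × ℂ => lam (x.1, η * x.2)) (Set.univ ×ˢ Metric.sphere 0 ρ) (p, w) := by
  have hn : ‖η‖ = 1 := Complex.norm_eq_one_of_pow_eq_one hη (by omega)
  have h1 := h.1 (p, η * w) ⟨trivial, by simp [hn, hw]⟩
  refine ContinuousWithinAt.comp (f := fun x : S × ℂ => (x.1, η * x.2)) (x := (p, w)) h1 ?_ ?_
  · apply Continuous.continuousWithinAt; fun_prop
  · rintro ⟨p', w'⟩ ⟨-, h2⟩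
    refine ⟨trivial, ?_⟩
    simp only [mem_sphere_zero_iff_norm] at h2 ⊢
    rw [norm_mul, hn, one_mul, h2]

lemma C_open (hD : 1 ≤ D) {ρ : ℝ} (hρ : 0 < ρ) {Q : S → ℂ[X]} {lam : S × ℂ → ℂ} (h : IsLam D ρ Q lam)
    {c v : S → ℂ} (hc : Continuous c) (hv : ∀ p, ‖v p‖ = ρ ^ D) {μ : ℕ}
    (hm : ∀ p, (Q p - C (v p)).rootMultiplicity (c p) = μ) (p0 : S) (w0 : ℂ) (hw0 : w0 ^ D = v p0)
    (h0 : lam (p0, w0) = c p0) :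
    ∀ᶠ x in 𝓝 (p0, w0), x.2 ^ D = v x.1 → lam x = c x.1 := by
  classical
  have hn := norm_of_pow hD hρ hw0 (hv p0)
  have hη : ∀ η ∈ nthRootsFinset D (1:ℂ), η ^ D = 1 := fun η h => (mem_nthRootsFinset (by omega) _).1 h
  have h1 : ∀ᶠ x in 𝓝[Set.univ ×ˢ Metric.sphere 0 ρ] (p0, w0), ∀ η ∈ nthRootsFinset D (1:ℂ),
      lam (p0, η * w0) ≠ c p0 → lam (x.1, η * x.2) ≠ c x.1 := by
    rw [Filter.eventually_all_finset]
    intro η hηm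
    by_cases hcase : lam (p0, η * w0) = c p0
    · exact Eventually.of_forall fun x h => absurd hcase h
    · have h2 := lam_rot_cont hD h p0 w0 hn η (hη η hηm)
      have h3 : ContinuousWithinAt (fun x : S × ℂ => c x.1) (Set.univ ×ˢ Metric.sphere 0 ρ) (p0, w0) :=
        (hc.comp continuous_fst).continuousWithinAt
      have h4 := (h2.sub h3)
      have h5 : ∀ᶠ x in 𝓝[Set.univ ×ˢ Metric.sphere 0 ρ] (p0, w0), lam (x.1, η * x.2) - c x.1 ≠ 0 :=
        h4.eventually_ne (sub_ne_zero.2 hcase)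
      filter_upwards [h5] with x hx _
      exact sub_ne_zero.1 hx
  rw [eventually_nhdsWithin_iff] at h1
  filter_upwards [h1] with x hx hxv
  have hxn := norm_of_pow hD hρ hxv (hv x.1)
  have hx' := hx ⟨trivial, by simpa using hxn⟩
  have c1 := lam_count h x.1 x.2 hxn (c x.1)
  have c0 := lam_count h p0 w0 hn (c p0)
  rw [hxv, hm] at c1
  rw [hw0, hm] at c0
  have hsub : (nthRootsFinset D (1 : ℂ)).filter (fun η => lam (x.1, η * x.2) = c x.1) ⊆
      (nthRootsFinset D (1 : ℂ)).filter (fun η => lam (p0, η * w0) = c p0) := by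
    intro η hη
    rw [Finset.mem_filter] at hη ⊢
    refine ⟨hη.1, ?_⟩
    by_contra hcon
    exact hx' η hη.1 hcon hη.2
  have heq := Finset.eq_of_subset_of_card_le hsub (by rw [c0, c1])
  have h1m : (1:ℂ) ∈ (nthRootsFinset D (1 : ℂ)).filter (fun η => lam (p0, η * w0) = c p0) := by
    rw [Finset.mem_filter]
    exact ⟨(mem_nthRootsFinset (by omega) _).2 (one_pow _), by rw [one_mul]; exact h0⟩
  rw [← heq, Finset.mem_filter, one_mul] at h1m
  exact h1m.2

lemma exists_pow (hD : 1 ≤ D) (v : ℂ) : ∃ w : ℂ, w ^ D = v := IsAlgClosed.exists_pow_nat_eq v (by omega)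

lemma exists_lam (hD : 1 ≤ D) {ρ : ℝ} (hρ : 0 < ρ) {Q : S → ℂ[X]} {lam : S × ℂ → ℂ} (h : IsLam D ρ Q lam)
    {c v : S → ℂ} (hv : ∀ p, ‖v p‖ = ρ ^ D) {μ : ℕ} (hμ : 1 ≤ μ)
    (hm : ∀ p, (Q p - C (v p)).rootMultiplicity (c p) = μ) (p : S) : ∃ w, w ^ D = v p ∧ lam (p, w) = c p := by
  classical
  obtain ⟨w, hw⟩ := exists_pow hD (v p)
  have c1 := lam_count h p w (norm_of_pow hD hρ hw (hv p)) (c p)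
  rw [hw, hm] at c1
  obtain ⟨η, hη⟩ := Finset.card_pos.1 (by omega : 0 < (((nthRootsFinset D (1 : ℂ)).filter (fun η => lam (p, η * w) = c p)).card))
  rw [Finset.mem_filter, mem_nthRootsFinset (by omega)] at hη
  exact ⟨η * w, by rw [mul_pow, hη.1, one_mul, hw], hη.2⟩

theorem lemE [CompactSpace S] [Nonempty S] (hD : 1 ≤ D) {ρ : ℝ} (hρ : 0 < ρ) {Q : S → ℂ[X]} {lam : S × ℂ → ℂ}
    (h : IsLam D ρ Q lam)
    {c v : S → ℂ} (hc : Continuous c) (hvc : Continuous v) (hv : ∀ p, ‖v p‖ = ρ ^ D) {μ : ℕ} (hμ : 1 ≤ μ)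
    (hm : ∀ p, (Q p - C (v p)).rootMultiplicity (c p) = μ)
    (hop : ∀ p, ∀ U ∈ 𝓝 p, ∀ᶠ v' in 𝓝[Metric.sphere 0 (ρ ^ D)] (v p), ∃ p' ∈ U, v p' = v') (w0 : ℂ) (hw0 : ‖w0‖ = ρ) :
    ∃ p, v p = w0 ^ D ∧ lam (p, w0) = c p := by
  have hps : PreconnectedSpace (Metric.sphere (0:ℂ) ρ) :=
    Subtype.preconnectedSpace (isPreconnected_sphere (by simp) 0 ρ)
  let W : Set (Metric.sphere (0:ℂ) ρ) := {w | ∃ p, v p = w ^ D ∧ lam (p, w) = c p}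
  have hWc : IsClosed W := by
    have h1 : Continuous fun x : S × Metric.sphere (0:ℂ) ρ => lam (x.1, x.2) :=
      h.1.comp_continuous (by fun_prop) (fun x => ⟨trivial, x.2.2⟩)
    have h2 : IsClosed {x : S × Metric.sphere (0:ℂ) ρ | v x.1 = (x.2 : ℂ) ^ D ∧ lam (x.1, x.2) = c x.1} :=
      (isClosed_eq (hvc.comp continuous_fst) (by fun_prop)).inter (isClosed_eq h1 (hc.comp continuous_fst))
    have h3 := isClosedMap_snd_of_compactSpace _ h2
    convert h3 using 1
    ext w; simp [W]
  have hWo : IsOpen W := by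
    rw [isOpen_iff_mem_nhds]
    rintro w ⟨p, hp1, hp2⟩
    obtain ⟨U, hU, V, hV, hUV⟩ := mem_nhds_prod_iff.1 (C_open hD hρ h hc hv hm p w hp1.symm hp2)
    have h1 := hop p U hU
    rw [hp1] at h1
    have h2 : Tendsto (fun w' : Metric.sphere (0:ℂ) ρ => (w' : ℂ) ^ D) (𝓝 w) (𝓝[Metric.sphere 0 (ρ ^ D)] ((w:ℂ) ^ D)) := by
      rw [tendsto_nhdsWithin_iff]
      refine ⟨Continuous.tendsto (by fun_prop) _, Eventually.of_forall fun w' => ?_⟩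
      have := w'.2
      rw [mem_sphere_zero_iff_norm] at this ⊢
      rw [norm_pow, this]
    have h3 : ∀ᶠ w' : Metric.sphere (0:ℂ) ρ in 𝓝 w, (w' : ℂ) ∈ V := continuous_subtype_val.continuousAt.eventually hV
    filter_upwards [h2.eventually h1, h3] with w' h4 h5
    obtain ⟨p', hp', hvp'⟩ := h4
    exact ⟨p', hvp', hUV (Set.mk_mem_prod hp' h5) hvp'.symm⟩
  have hWn : W.Nonempty := by
    obtain ⟨p⟩ := ‹Nonempty S›
    obtain ⟨w, h1, h2⟩ := exists_lam hD hρ h hv hμ hm p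
    exact ⟨⟨w, by simpa using norm_of_pow hD hρ h1 (hv p)⟩, p, h1.symm, h2⟩
  have := IsClopen.eq_univ ⟨hWc, hWo⟩ hWn
  have h1 : (⟨w0, by simpa using hw0⟩ : Metric.sphere (0:ℂ) ρ) ∈ W := by rw [this]; trivial
  exact h1

end LC
end CL

namespace CL
open Polynomial
set_option linter.all false

section GR
variable {k : ℕ}

lemma aeval_X_comp (q : Option (Fin k) → ℂ) :
    (⇑(MvPolynomial.aeval q : MvPolynomial (Option (Fin k)) ℂ →ₐ[ℂ] ℂ) ∘ fun j => MvPolynomial.X j) = q := by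
  funext j; simp

lemma PP_coeff_cont (d e i : ℕ) : Continuous fun q : Option (Fin k) → ℂ => (PP d e q).coeff i := by
  have : ∀ q : Option (Fin k) → ℂ, (PP d e q).coeff i =
      MvPolynomial.eval q ((PP d e (fun j => (MvPolynomial.X j : MvPolynomial (Option (Fin k)) ℂ))).coeff i) := by
    intro q
    have h := PP_map (MvPolynomial.aeval q : MvPolynomial (Option (Fin k)) ℂ →ₐ[ℂ] ℂ) d e (fun j => MvPolynomial.X j)
    rw [aeval_X_comp] at h
    rw [← h, coeff_map]
    simp [MvPolynomial.aeval_eq_eval]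
  simp only [this]
  exact MvPolynomial.continuous_eval _

lemma PP_eval_cont {d e : ℕ} (hd : d = e + k + 1) :
    Continuous fun x : (Option (Fin k) → ℂ) × ℂ => (PP d e x.1).eval x.2 := by
  have : ∀ x : (Option (Fin k) → ℂ) × ℂ, (PP d e x.1).eval x.2 = ∑ i ∈ Finset.range (d + 1), (PP d e x.1).coeff i * x.2 ^ i := by
    intro x; rw [eval_eq_sum_range, PP_natDegree hd]
  simp only [this]
  exact continuous_finset_sum _ fun i _ => ((PP_coeff_cont d e i).comp continuous_fst).mul (continuous_snd.pow i)

lemma FF_cont (d e N : ℕ) (j : Option (Fin k)) : Continuous fun q : Option (Fin k) → ℂ => FF d e N q j := by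
  simp only [← eval_FM]; exact MvPolynomial.continuous_eval _

lemma FF_succ (d e N : ℕ) (q : Option (Fin k) → ℂ) (j) : FF d e (N + 1) q j = (PP d e q).eval (FF d e N q j) := by
  unfold FF; rw [Function.iterate_succ_apply']

structure Grow (k d e : ℕ) (R M : ℝ) : Prop where
  pos : 0 < R
  bd : ∀ N, 1 ≤ N → ∀ q : Option (Fin k) → ℂ, (∀ j, ‖FF d e N q j‖ < 2 * R) → ‖q‖ ≤ M
  esc : ∀ (q : Option (Fin k) → ℂ) z, ‖q‖ ≤ M → R ≤ ‖z‖ → 2 * ‖z‖ ≤ ‖(PP d e q).eval z‖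

lemma grow_delta {d e : ℕ} (he : 1 ≤ e) (hd : d = e + k + 1) : ∃ δ > 0, ∀ q : Option (Fin k) → ℂ,
    ∃ j, δ * ‖q‖ ^ d ≤ ‖FF d e 1 q j‖ := by
  have hF1 : ∀ (q : Option (Fin k) → ℂ) j, FF d e 1 q j = (PP d e q).eval (cp q j) := fun q j => rfl
  let g : (Option (Fin k) → ℂ) → ℝ := fun q => ‖fun j => FF d e 1 q j‖
  have hg : Continuous g := (continuous_pi fun j => FF_cont d e 1 j).norm
  obtain ⟨q0, hq0, hmin⟩ := (isCompact_sphere (0 : Option (Fin k) → ℂ) 1).exists_isMinOn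
    ((NormedSpace.sphere_nonempty (E := Option (Fin k) → ℂ)).2 zero_le_one) hg.continuousOn
  have hδ : 0 < g q0 := by
    rw [norm_pos_iff]
    intro h
    have h1 := lemZ he hd q0 (fun j => by rw [← hF1]; exact congr_fun h j)
    have : q0 = 0 := funext h1
    rw [this] at hq0; simp at hq0
  refine ⟨g q0, hδ, fun q => ?_⟩
  obtain ⟨j, hj⟩ : ∃ j, ‖FF d e 1 q j‖ = g q := by
    obtain ⟨j, hj⟩ := Finite.exists_max (fun j => ‖FF d e 1 q j‖)
    refine ⟨j, le_antisymm (norm_le_pi_norm (fun j => FF d e 1 q j) j) ((pi_norm_le_iff_of_nonneg (norm_nonneg _)).2 hj)⟩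
  refine ⟨j, ?_⟩
  rw [hj]
  by_cases hq : q = 0
  · subst hq; rw [norm_zero, zero_pow (by omega), mul_zero]; exact norm_nonneg _
  · have hn : 0 < ‖q‖ := norm_pos_iff.2 hq
    let q1 : Option (Fin k) → ℂ := fun j => ((‖q‖ : ℂ)⁻¹) * q j
    have hq1 : q1 = (‖q‖ : ℂ)⁻¹ • q := rfl
    have hq1n : ‖q1‖ = 1 := by rw [hq1, norm_smul]; simp [hn.ne']
    have h1 : g q0 ≤ g q1 := hmin (by simpa using hq1n)
    have h2 : (fun j => FF d e 1 q j) = ((‖q‖ : ℂ) ^ d) • (fun j => FF d e 1 q1 j) := by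
      funext j
      have h3 : q = fun j => (‖q‖ : ℂ) * q1 j := by
        funext j; simp only [q1]
        have : (‖q‖ : ℂ) ≠ 0 := by exact_mod_cast hn.ne'
        field_simp
      have h4 : cp q j = (‖q‖ : ℂ) * cp q1 j := by
        conv_lhs => rw [h3]
        cases j <;> simp [cp]
      rw [hF1, h4]
      conv_lhs => enter [2]; rw [h3]
      rw [PP_homog hd]; rfl
    have h3 : g q = ‖q‖ ^ d * g q1 := by
      simp only [g]; rw [h2, norm_smul]; simp
    rw [h3, mul_comm]; gcongr

lemma grow_K {d e : ℕ} (he : 1 ≤ e) (hd : d = e + k + 1) : ∃ K : ℝ, 1 ≤ K ∧ ∀ (q : Option (Fin k) → ℂ) z (M : ℝ),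
    1 ≤ M → ‖q‖ ≤ M → K * M ≤ ‖z‖ → 2 * ‖z‖ ≤ ‖(PP d e q).eval z‖ := by
  have hd0 : (0:ℝ) < d := by exact_mod_cast (by omega : 0 < d)
  have hc : Continuous fun q : Option (Fin k) → ℂ => ‖(PP d e q).eval 1‖ :=
    ((PP_eval_cont hd).comp (continuous_id.prodMk continuous_const)).norm
  have h0 : ‖(PP d e (0 : Option (Fin k) → ℂ)).eval 1‖ = 1 / d := by
    have := PP_zero (A := ℂ) (k := k) hd
    rw [show (0 : Option (Fin k) → ℂ) = fun _ => 0 from rfl, this]; simp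
  have hev : ∀ᶠ q in 𝓝 (0 : Option (Fin k) → ℂ), 1 / (2 * d : ℝ) < ‖(PP d e q).eval 1‖ := by
    apply continuousAt_const.eventually_lt hc.continuousAt
    rw [h0]; apply one_div_lt_one_div_of_lt hd0; linarith
  obtain ⟨ε, hε, hb⟩ := Metric.eventually_nhds_iff.1 hev
  refine ⟨max (4 * d) (2 / ε), le_max_of_le_left ?_, ?_⟩
  · have : (1:ℝ) ≤ d := by exact_mod_cast (by omega : 1 ≤ d)
    linarith
  intro q z M hM hq hz
  set K := max (4 * (d:ℝ)) (2 / ε)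
  have hK1 : 4 * d ≤ K := le_max_left _ _
  have hK2 : 2 / ε ≤ K := le_max_right _ _
  have hKp : 0 < K := by linarith
  have hKz : K ≤ ‖z‖ := le_trans (by nlinarith) hz
  have hzp : 0 < ‖z‖ := by linarith
  have hz0 : z ≠ 0 := norm_pos_iff.1 hzp
  let q1 : Option (Fin k) → ℂ := fun j => z⁻¹ * q j
  have hq1 : q1 = z⁻¹ • q := rfl
  have hq1n : ‖q1‖ < ε := by
    rw [hq1, norm_smul, norm_inv, inv_mul_lt_iff₀ hzp]
    have : 2 ≤ K * ε := by rwa [div_le_iff₀ hε] at hK2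
    nlinarith
  have h1 := hb (y := q1) (by rwa [dist_zero_right])
  have h2 : (PP d e q).eval z = z ^ d * (PP d e q1).eval 1 := by
    rw [← PP_homog hd, mul_one]
    congr 2
    funext j; simp only [q1]; field_simp
  rw [h2, norm_mul, norm_pow]
  have h3 : ‖z‖ ^ d * (1 / (2 * d)) ≤ ‖z‖ ^ d * ‖(PP d e q1).eval 1‖ := by gcongr
  refine le_trans ?_ h3
  obtain ⟨m, rfl⟩ : ∃ m, d = m + 2 := ⟨d - 2, by omega⟩
  have hz1 : 1 ≤ ‖z‖ := by
    have : (1:ℝ) ≤ ((m + 2 : ℕ) : ℝ) := by exact_mod_cast (by omega : 1 ≤ m + 2)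
    linarith
  have h4 : ‖z‖ * ‖z‖ ≤ ‖z‖ ^ (m + 2) := by
    rw [pow_add, sq]
    nlinarith [one_le_pow₀ (n := m) hz1, mul_pos hzp hzp]
  rw [mul_one_div, le_div_iff₀ (by linarith)]
  nlinarith

theorem grow_exists {d e : ℕ} (he : 1 ≤ e) (hd : d = e + k + 1) : ∃ R M, Grow k d e R M := by
  obtain ⟨δ, hδ, hdel⟩ := grow_delta (k := k) he hd
  obtain ⟨K, hK, hesc⟩ := grow_K (k := k) he hd
  let M0 := max 1 (2 * K / δ)
  have hM1 : 1 ≤ M0 := le_max_left _ _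
  have hM2 : 2 * K / δ ≤ M0 := le_max_right _ _
  refine ⟨K * M0, M0, by positivity, ?_, fun q z hq hz => hesc q z M0 hM1 hq hz⟩
  intro N hN q hq
  by_contra! hcon
  obtain ⟨j, hj⟩ := hdel q
  have hM : 1 ≤ ‖q‖ := by linarith
  have h1 : 2 * K * ‖q‖ ≤ δ * ‖q‖ ^ d := by
    obtain ⟨m, rfl⟩ : ∃ m, d = m + 2 := ⟨d - 2, by omega⟩
    have h4 : ‖q‖ * ‖q‖ ≤ ‖q‖ ^ (m + 2) := by
      rw [pow_add, sq]
      have := one_le_pow₀ (n := m) hM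
      nlinarith [mul_pos (by linarith : 0 < ‖q‖) (by linarith : 0 < ‖q‖)]
    rw [div_le_iff₀ hδ] at hM2
    have h5 : 2 * K ≤ ‖q‖ * δ := hM2.trans (by gcongr)
    calc 2 * K * ‖q‖ ≤ (‖q‖ * δ) * ‖q‖ := by gcongr
      _ = δ * (‖q‖ * ‖q‖) := by ring
      _ ≤ _ := by gcongr
  have h2 : ∀ n, 2 * K * ‖q‖ ≤ ‖FF d e (n + 1) q j‖ := by
    intro n
    induction n with
    | zero => exact h1.trans hj
    | succ n ih =>
      rw [FF_succ]
      have := hesc q (FF d e (n + 1) q j) ‖q‖ hM le_rfl (by nlinarith)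
      linarith [norm_nonneg (FF d e (n + 1) q j)]
  have h3 := h2 (N - 1)
  rw [Nat.sub_add_cancel hN] at h3
  have h4 := hq j
  nlinarith

lemma cp_ext0_none (q : Option (Fin k) → ℂ) : cp (ext0 q) none = cp q none := rfl
lemma cp_ext0_zero (q : Option (Fin k) → ℂ) : cp (ext0 q) (some 0) = cp q none := rfl
lemma cp_ext0_succ (q : Option (Fin k) → ℂ) (i : Fin k) : cp (ext0 q) (some i.succ) = cp q (some i) := rfl

lemma FF_ext0 (d e N : ℕ) (q : Option (Fin k) → ℂ) :
    FF d e N (ext0 q) none = FF d (e + 1) N q none ∧ FF d e N (ext0 q) (some 0) = FF d (e + 1) N q none ∧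
    ∀ i : Fin k, FF d e N (ext0 q) (some i.succ) = FF d (e + 1) N q (some i) := by
  simp only [FF, PP_ext0, cp_ext0_none, cp_ext0_zero, cp_ext0_succ, true_and, implies_true]

lemma ext0_norm (q : Option (Fin k) → ℂ) : ‖ext0 q‖ = ‖q‖ := by
  apply le_antisymm
  · rw [pi_norm_le_iff_of_nonneg (norm_nonneg _)]
    rintro (_ | i)
    · exact norm_le_pi_norm q none
    · refine Fin.cases ?_ (fun i => ?_) i
      · show ‖(0:ℂ)‖ ≤ _; simp
      · exact norm_le_pi_norm q (some i)
  · rw [pi_norm_le_iff_of_nonneg (norm_nonneg _)]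
    rintro (_ | i)
    · exact norm_le_pi_norm (ext0 q) none
    · exact norm_le_pi_norm (ext0 q) (some i.succ)

lemma Grow.down {d e : ℕ} {R M : ℝ} (h : Grow (k + 1) d e R M) : Grow k d (e + 1) R M := by
  refine ⟨h.pos, fun N hN q hq => ?_, fun q z hq hz => ?_⟩
  · rw [← ext0_norm]
    apply h.bd N hN
    obtain ⟨h1, h2, h3⟩ := FF_ext0 d e N q
    rintro (_ | i)
    · rw [h1]; exact hq _
    · refine Fin.cases ?_ (fun i => ?_) i
      · rw [h2]; exact hq _
      · rw [h3]; exact hq _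
  · rw [← PP_ext0]; exact h.esc _ _ (by rwa [ext0_norm]) hz

lemma ext0_cont : Continuous (ext0 : (Option (Fin k) → ℂ) → _) := by
  refine continuous_pi fun j => ?_
  rcases j with _ | i
  · exact continuous_apply none
  · refine Fin.cases ?_ (fun i => ?_) i
    · exact continuous_const
    · exact continuous_apply (some i)

end GR
end CL

namespace CL
open Polynomial
set_option linter.all false

section OM
variable {k : ℕ}

noncomputable def Fv (d e N : ℕ) (q : Option (Fin k) → ℂ) : Option (Fin k) → ℂ := fun j => FF d e N q j

lemma Fv_cont (d e N : ℕ) : Continuous (Fv (k := k) d e N) := continuous_pi fun j => FF_cont d e N j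

lemma Fv_eq (d e N : ℕ) : Fv (k := k) d e N = fm (FM k d e N) := by
  funext q j; simp only [Fv, fm, eval_FM]

def Om (k d e N : ℕ) (R : ℝ) : Set (Option (Fin k) → ℂ) := {q | ‖Fv d e N q‖ < 2 * R}

lemma Om_open (d e N : ℕ) (R : ℝ) : IsOpen (Om k d e N R) :=
  isOpen_lt (Fv_cont d e N).norm continuous_const

lemma mem_Om {d e N : ℕ} {R : ℝ} (hR : 0 < R) (q : Option (Fin k) → ℂ) :
    q ∈ Om k d e N R ↔ ∀ j, ‖FF d e N q j‖ < 2 * R := by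
  rw [Om, Set.mem_setOf_eq, pi_norm_lt_iff (by linarith)]; rfl

variable {d e N : ℕ} {R M : ℝ}

lemma Om_bd (hN : 1 ≤ N) (g : Grow k d e R M) {q} (hq : q ∈ Om k d e N R) : ‖q‖ ≤ M :=
  g.bd N hN q ((mem_Om g.pos q).1 hq)

lemma Fv_open (he : 1 ≤ e) (hd : d = e + k + 1) (hN : 1 ≤ N) (g : Grow k d e R M) {p} (hp : p ∈ Om k d e N R)
    {U : Set (Option (Fin k) → ℂ)} (hU : U ∈ 𝓝 p) : Fv d e N '' U ∈ 𝓝 (Fv d e N p) := by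
  have := open_lemma (FM k d e N) (FM_integral he hd hN) p ?_ U hU
  · rwa [← Fv_eq] at this
  · refine ⟨M, ?_⟩
    rw [← Fv_eq]
    have : ∀ᶠ y in 𝓝 (Fv d e N p), ‖y‖ < 2 * R := continuous_norm.continuousAt.eventually_lt continuousAt_const hp
    filter_upwards [this] with y hy x hx
    apply Om_bd hN g
    rw [Om, Set.mem_setOf_eq, hx]; exact hy

variable {A : Set (Option (Fin k) → ℂ)}

lemma compA (hN : 1 ≤ N) (g : Grow k d e R M) (hAs : A ⊆ Om k d e N R) (hB : IsOpen (Om k d e N R \ A)) {r : ℝ}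
    (hr : r < 2 * R) : IsCompact (A ∩ Fv d e N ⁻¹' Metric.closedBall 0 r) := by
  have heq : A ∩ Fv d e N ⁻¹' Metric.closedBall 0 r = (Om k d e N R \ A)ᶜ ∩ Fv d e N ⁻¹' Metric.closedBall 0 r := by
    ext q
    constructor
    · rintro ⟨h1, h2⟩; exact ⟨fun h => h.2 h1, h2⟩
    · rintro ⟨h1, h2⟩
      refine ⟨?_, h2⟩
      by_contra hcon
      apply h1
      refine ⟨?_, hcon⟩
      have h2' : ‖Fv d e N q‖ ≤ r := by simpa using h2
      exact lt_of_le_of_lt h2' hr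
  apply (isCompact_closedBall (0 : Option (Fin k) → ℂ) M).of_isClosed_subset
  · rw [heq]
    exact hB.isClosed_compl.inter (Metric.isClosed_closedBall.preimage (Fv_cont d e N))
  · rintro q ⟨h1, h2⟩
    simpa using Om_bd hN g (hAs h1)

lemma Fv_surj (he : 1 ≤ e) (hd : d = e + k + 1) (hN : 1 ≤ N) (g : Grow k d e R M) (hAs : A ⊆ Om k d e N R)
    (hA : IsOpen A) (hB : IsOpen (Om k d e N R \ A)) (hne : A.Nonempty) (y : Option (Fin k) → ℂ) (hy : ‖y‖ < 2 * R) :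
    ∃ q ∈ A, Fv d e N q = y := by
  have hopen : IsOpen (Fv d e N '' A) := by
    rw [isOpen_iff_mem_nhds]
    rintro _ ⟨p, hp, rfl⟩
    exact Fv_open he hd hN g (hAs hp) (hA.mem_nhds hp)
  have hclo : IsOpen (Metric.ball (0 : Option (Fin k) → ℂ) (2 * R) \ Fv d e N '' A) := by
    rw [isOpen_iff_mem_nhds]
    rintro y ⟨hy, hyA⟩
    have hy' : ‖y‖ < 2 * R := by simpa using hy
    obtain ⟨r, hr1, hr2⟩ := exists_between hy'
    have hc := ((compA hN g hAs hB hr2).image (Fv_cont d e N)).isClosed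
    have h1 : (Fv d e N '' (A ∩ Fv d e N ⁻¹' Metric.closedBall 0 r))ᶜ ∈ 𝓝 y := by
      apply hc.isOpen_compl.mem_nhds
      rintro ⟨q, hq, rfl⟩
      exact hyA ⟨q, hq.1, rfl⟩
    have h2 : Metric.ball (0 : Option (Fin k) → ℂ) r ∈ 𝓝 y := Metric.isOpen_ball.mem_nhds (by simpa using hr1)
    filter_upwards [h1, h2] with y' h3 h4
    refine ⟨Metric.ball_subset_ball hr2.le h4, ?_⟩
    rintro ⟨q, hq, rfl⟩
    exact h3 ⟨q, ⟨hq, Metric.ball_subset_closedBall h4⟩, rfl⟩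
  have hsub : Metric.ball (0 : Option (Fin k) → ℂ) (2 * R) ⊆ Fv d e N '' A := by
    refine IsPreconnected.subset_left_of_subset_union hopen hclo Set.disjoint_sdiff_right ?_ ?_
      (convex_ball (0 : Option (Fin k) → ℂ) (2 * R)).isPreconnected
    · intro y hy
      by_cases h : y ∈ Fv d e N '' A
      · left; exact h
      · right; exact ⟨hy, h⟩
    · obtain ⟨p, hp⟩ := hne
      refine ⟨Fv d e N p, by simpa [Om] using hAs hp, p, hp, rfl⟩
  obtain ⟨q, hq, h⟩ := hsub (by simpa using hy)
  exact ⟨q, hq, h⟩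

end OM
end CL

namespace CL
open Polynomial
set_option linter.all false

section ITER
variable {A B : Type*} [CommRing A] [Algebra ℂ A] [CommRing B] [Algebra ℂ B]

noncomputable def It (P : A[X]) : ℕ → A[X]
  | 0 => X
  | n + 1 => P.comp (It P n)

lemma It_map (φ : A →+* B) (P : A[X]) (n : ℕ) : (It P n).map φ = It (P.map φ) n := by
  induction n with
  | zero => simp [It]
  | succ n ih => simp only [It, Polynomial.map_comp, ih]

lemma It_eval (P : A[X]) (n : ℕ) (z : A) : (It P n).eval z = (fun z => P.eval z)^[n] z := by
  induction n with
  | zero => simp [It]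
  | succ n ih => rw [It, eval_comp, ih, Function.iterate_succ_apply']

lemma It_natDegree (P : ℂ[X]) (n : ℕ) : (It P n).natDegree = P.natDegree ^ n := by
  induction n with
  | zero => simp [It]
  | succ n ih => rw [It, natDegree_comp, ih]; ring

noncomputable def ell (d : ℕ) : ℕ → ℂ
  | 0 => 1
  | n + 1 => (d : ℂ)⁻¹ * ell d n ^ d

lemma ell_ne (d : ℕ) (hd : d ≠ 0) (n : ℕ) : ell d n ≠ 0 := by
  induction n with
  | zero => simp [ell]
  | succ n ih => exact mul_ne_zero (inv_ne_zero (by exact_mod_cast hd)) (pow_ne_zero _ ih)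

lemma It_lead (P : ℂ[X]) {d : ℕ} (hd : P.natDegree = d) (hd0 : d ≠ 0) (hl : P.leadingCoeff = (d : ℂ)⁻¹) (n : ℕ) :
    (It P n).leadingCoeff = ell d n := by
  induction n with
  | zero => simp [It, ell]
  | succ n ih =>
    rw [It, leadingCoeff_comp, ih, hl, hd, ell]
    rw [It_natDegree, hd]; exact pow_ne_zero _ hd0

lemma It_deriv_root (P : ℂ[X]) (n : ℕ) (y : ℂ) (h : (derivative (It P n)).IsRoot y) :
    ∃ i < n, (derivative P).IsRoot ((fun z => P.eval z)^[i] y) := by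
  induction n with
  | zero => simp [It] at h
  | succ n ih =>
    rw [It, derivative_comp, IsRoot, eval_mul, eval_comp, It_eval, mul_eq_zero] at h
    rcases h with h | h
    · obtain ⟨i, hi, h'⟩ := ih h; exact ⟨i, by omega, h'⟩
    · exact ⟨n, by omega, h⟩

lemma It_deriv_mult (P : ℂ[X]) (hP : 0 < P.natDegree) (c : ℂ) (n : ℕ)
    (h : ∀ i, 1 ≤ i → i < n + 1 → (derivative P).eval ((fun z => P.eval z)^[i] c) ≠ 0) :
    derivative (It P (n + 1)) ≠ 0 ∧
    (derivative (It P (n + 1))).rootMultiplicity c = (derivative P).rootMultiplicity c := by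
  have hP' : derivative P ≠ 0 := by
    intro h; have := natDegree_eq_zero_of_derivative_eq_zero h; omega
  induction n with
  | zero => simp [It, hP']
  | succ n ih =>
    obtain ⟨h1, h2⟩ := ih fun i hi hi' => h i hi (by omega)
    rw [It, derivative_comp]
    have h3 : ((derivative P).comp (It P (n+1))).eval c ≠ 0 := by
      rw [eval_comp, It_eval]; exact h _ (by omega) (by omega)
    have h4 : ((derivative P).comp (It P (n+1))) ≠ 0 := by rintro h; rw [h] at h3; simp at h3
    refine ⟨mul_ne_zero h1 h4, ?_⟩
    rw [rootMultiplicity_mul (mul_ne_zero h1 h4), h2, rootMultiplicity_eq_zero h3, add_zero]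

lemma mult_of_deriv (f : ℂ[X]) (hf : derivative f ≠ 0) (c : ℂ) :
    (f - C (f.eval c)).rootMultiplicity c = (derivative f).rootMultiplicity c + 1 := by
  have hr : (f - C (f.eval c)).IsRoot c := by simp
  have h := derivative_rootMultiplicity_of_root hr
  rw [derivative_sub, derivative_C, sub_zero] at h
  have : 0 < (f - C (f.eval c)).rootMultiplicity c := by
    rw [rootMultiplicity_pos]
    · exact hr
    · intro h0
      apply hf
      have := congrArg derivative h0
      simpa using this
  omega

lemma mult_scale (f : ℂ[X]) {l : ℂ} (hl : l ≠ 0) (v c : ℂ) :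
    (C l⁻¹ * f - C (v / l)).rootMultiplicity c = (f - C v).rootMultiplicity c := by
  have : C l⁻¹ * f - C (v / l) = C l⁻¹ * (f - C v) := by
    rw [mul_sub, ← C_mul]; congr 2; field_simp
  rw [this]
  by_cases h0 : f - C v = 0
  · rw [h0]; simp
  · rw [rootMultiplicity_mul (mul_ne_zero (C_ne_zero.2 (inv_ne_zero hl)) h0), rootMultiplicity_C, zero_add]

variable {k : ℕ}

lemma It_PP_coeff_cont (d e n i : ℕ) (f : ℂ[X]) :
    Continuous fun q : Option (Fin k) → ℂ => ((It (PP d e q) n).comp f).coeff i := by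
  have : ∀ q : Option (Fin k) → ℂ, ((It (PP d e q) n).comp f).coeff i =
      MvPolynomial.eval q (((It (PP d e (fun j => (MvPolynomial.X j : MvPolynomial (Option (Fin k)) ℂ))) n).comp
        (f.map (algebraMap ℂ (MvPolynomial (Option (Fin k)) ℂ)))).coeff i) := by
    intro q
    let φ := (MvPolynomial.aeval q : MvPolynomial (Option (Fin k)) ℂ →ₐ[ℂ] ℂ)
    have h := PP_map φ d e (fun j => MvPolynomial.X j)
    rw [aeval_X_comp] at h
    rw [← h, ← It_map]
    have h2 : f = (f.map (algebraMap ℂ (MvPolynomial (Option (Fin k)) ℂ))).map (φ : MvPolynomial (Option (Fin k)) ℂ →+* ℂ) := by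
      rw [Polynomial.map_map, AlgHom.comp_algebraMap]; simp
    conv_lhs => rw [h2]
    rw [← Polynomial.map_comp, coeff_map]
    simp [φ, MvPolynomial.aeval_eq_eval]
  simp only [this]
  exact MvPolynomial.continuous_eval _

lemma PP_lead {d e : ℕ} (hd : d = e + k + 1) (q : Option (Fin k) → ℂ) : (PP d e q).leadingCoeff = (d : ℂ)⁻¹ := by
  rw [leadingCoeff, PP_natDegree hd, PP_coeff_d hd]; rfl

lemma FF_add (d e m n : ℕ) (q : Option (Fin k) → ℂ) (j) :
    FF d e (m + n) q j = (fun z => (PP d e q).eval z)^[m] (FF d e n q j) := by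
  unfold FF; rw [Function.iterate_add_apply]

variable {d e N : ℕ} {R M : ℝ}

lemma esc_iter (g : Grow k d e R M) {q : Option (Fin k) → ℂ} (hq : ‖q‖ ≤ M) {z : ℂ} (hz : R ≤ ‖z‖) (m : ℕ) :
    ‖z‖ ≤ ‖(fun z => (PP d e q).eval z)^[m] z‖ := by
  induction m with
  | zero => simp
  | succ m ih =>
    rw [Function.iterate_succ_apply']
    have := g.esc q _ hq (hz.trans ih)
    linarith [norm_nonneg ((fun z => (PP d e q).eval z)^[m] z)]

lemma FF_lt (g : Grow k d e R M) {q : Option (Fin k) → ℂ} (hq : ‖q‖ ≤ M) {j} (h : ‖FF d e N q j‖ ≤ R) {m : ℕ}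
    (hm : m < N) : ‖FF d e m q j‖ < R := by
  by_contra! hcon
  have h1 := g.esc q _ hq hcon
  rw [← FF_succ] at h1
  have hp := g.pos
  have h2 := esc_iter g hq (z := FF d e (m+1) q j) (by linarith) (N - (m+1))
  rw [← FF_add, Nat.sub_add_cancel hm] at h2
  linarith

lemma FF_le (g : Grow k d e R M) {q : Option (Fin k) → ℂ} (hq : ‖q‖ ≤ M) {j} (h : ‖FF d e N q j‖ ≤ R) {m : ℕ}
    (hm : m ≤ N) : ‖FF d e m q j‖ ≤ R := by
  rcases hm.lt_or_eq with h1 | h1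
  · exact (FF_lt g hq h h1).le
  · rw [h1]; exact h

lemma crit_orbit (he : 1 ≤ e) {q : Option (Fin k) → ℂ} {y : ℂ} {n : ℕ}
    (h : (derivative (It (PP d e q) n)).IsRoot y) :
    ∃ m j, m ≤ n ∧ 1 ≤ m ∧ (It (PP d e q) n).eval y = FF d e m q j := by
  obtain ⟨i, hi, h1⟩ := It_deriv_root _ _ _ h
  rw [derivative_PP, isRoot_dP he] at h1
  obtain ⟨j, hj⟩ := h1
  refine ⟨n - i, j, by omega, by omega, ?_⟩
  rw [It_eval, FF, ← hj, ← Function.iterate_add_apply, Nat.sub_add_cancel hi.le]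

lemma orbit_noncrit (he : 1 ≤ e) (g : Grow k d e R M) {q : Option (Fin k) → ℂ} (hq : ‖q‖ ≤ M) (h : ∀ j, ‖FF d e N q j‖ ≤ R)
    {j} (hj : ‖FF d e N q j‖ = R) {i : ℕ} (hi1 : 1 ≤ i) (hi : i ≤ N) :
    (derivative (PP d e q)).eval ((fun z => (PP d e q).eval z)^[i] (cp q j)) ≠ 0 := by
  intro h0
  rw [derivative_PP] at h0
  obtain ⟨j', hj'⟩ := (isRoot_dP he q _).1 h0
  have h1 : FF d e N q j = FF d e (N - i) q j' := by
    have := FF_add d e (N - i) i q j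
    rw [Nat.sub_add_cancel hi] at this
    rw [this]
    unfold FF
    rw [hj']
  have h2 := FF_lt g hq (h j') (show N - i < N by omega)
  rw [← h1, hj] at h2
  exact lt_irrefl _ h2

end ITER
end CL

namespace CL
open Polynomial
set_option linter.all false

section STEP

theorem lemE' {D : ℕ} {S : Type*} [TopologicalSpace S] [CompactSpace S] (G : Set S) (hG : IsClopen G) (hGn : G.Nonempty)
    (hD : 1 ≤ D) {ρ : ℝ} (hρ : 0 < ρ) {Q : S → ℂ[X]} {lam : S × ℂ → ℂ}
    (h : IsLam D ρ Q lam)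
    {c v : S → ℂ} (hc : Continuous c) (hvc : Continuous v) (hv : ∀ p, ‖v p‖ = ρ ^ D) {μ : ℕ} (hμ : 1 ≤ μ)
    (hm : ∀ p, (Q p - C (v p)).rootMultiplicity (c p) = μ)
    (hop : ∀ p, ∀ U ∈ 𝓝 p, ∀ᶠ v' in 𝓝[Metric.sphere 0 (ρ ^ D)] (v p), ∃ p' ∈ U, v p' = v') (w0 : ℂ) (hw0 : ‖w0‖ = ρ) :
    ∃ p ∈ G, v p = w0 ^ D ∧ lam (p, w0) = c p := by
  have : CompactSpace G := isCompact_iff_compactSpace.1 hG.1.isCompact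
  have : Nonempty G := hGn.to_subtype
  have hl : IsLam D ρ (fun p : G => Q p) (fun x : G × ℂ => lam (x.1, x.2)) := by
    refine ⟨h.1.comp (by fun_prop) (fun x hx => ⟨trivial, hx.2⟩), fun p w hw => h.2 p w hw⟩
  obtain ⟨p, h1, h2⟩ := lemE hD hρ hl (c := fun p : G => c p) (v := fun p : G => v p) (hc.comp continuous_subtype_val)
    (hvc.comp continuous_subtype_val) (fun p => hv p) hμ (fun p => hm p) (by
      intro p U hU
      have := hG.2.isOpenMap_subtype_val.image_mem_nhds hU
      filter_upwards [hop p _ this] with v' hv'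
      obtain ⟨_, ⟨p', hp', rfl⟩, h⟩ := hv'
      exact ⟨p', hp', h⟩) w0 hw0
  exact ⟨p, p.2, h1, h2⟩

lemma exists_rho {x : ℝ} (hx : 0 < x) {D : ℕ} (hD : 1 ≤ D) : ∃ ρ : ℝ, 0 < ρ ∧ ρ ^ D = x :=
  ⟨x ^ ((D : ℝ)⁻¹), by positivity, Real.rpow_inv_natCast_pow hx.le (by omega)⟩

variable {k d e N : ℕ} {R M : ℝ}

noncomputable def QN (d e N : ℕ) (q : Option (Fin k) → ℂ) : ℂ[X] := C (ell d N)⁻¹ * It (PP d e q) N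

lemma QN_monic (hd : d = e + k + 1) (q : Option (Fin k) → ℂ) : (QN d e N q).Monic := by
  rw [Monic, QN, leadingCoeff_mul, leadingCoeff_C, It_lead _ (PP_natDegree hd q) (by omega) (PP_lead hd q)]
  exact inv_mul_cancel₀ (ell_ne d (by omega) N)

lemma QN_natDegree (hd : d = e + k + 1) (q : Option (Fin k) → ℂ) : (QN d e N q).natDegree = d ^ N := by
  rw [QN, natDegree_C_mul (inv_ne_zero (ell_ne d (by omega) N)), It_natDegree, PP_natDegree hd]

lemma QN_coeff_cont (i : ℕ) : Continuous fun q : Option (Fin k) → ℂ => (QN d e N q).coeff i := by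
  simp only [QN, coeff_C_mul]
  have := It_PP_coeff_cont (k := k) d e N i X
  simp only [comp_X] at this
  exact continuous_const.mul this

lemma QN_crit (he : 1 ≤ e) (hd : d = e + k + 1) (g : Grow k d e R M) {q : Option (Fin k) → ℂ} (hq : ‖q‖ ≤ M)
    (h : ∀ j, ‖FF d e N q j‖ ≤ R) (z : ℂ)
    (hz : (derivative (QN d e N q)).IsRoot z) : ‖(QN d e N q).eval z‖ ≤ R / ‖ell d N‖ := by
  rw [QN, derivative_C_mul, IsRoot, eval_mul, eval_C, mul_eq_zero] at hz
  have hz := hz.resolve_left (inv_ne_zero (ell_ne d (by omega) N))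
  obtain ⟨m, j, h1, h2, h3⟩ := crit_orbit he hz
  rw [QN, eval_mul, eval_C, h3, norm_mul, norm_inv, div_eq_inv_mul]
  gcongr
  exact FF_le g hq (h j) h1

lemma QN_mult (he : 1 ≤ e) (hd : d = e + k + 1) (hN : 1 ≤ N) (g : Grow k d e R M) {q : Option (Fin k) → ℂ} (hq : ‖q‖ ≤ M)
    (h : ∀ j, ‖FF d e N q j‖ ≤ R) {j} (hj : ‖FF d e N q j‖ = R) :
    (QN d e N q - C (FF d e N q j / ell d N)).rootMultiplicity (cp q j) = (dP e q).rootMultiplicity (cp q j) + 1 := by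
  rw [QN, mult_scale _ (ell_ne d (by omega) N)]
  have h1 : FF d e N q j = (It (PP d e q) N).eval (cp q j) := by rw [It_eval]; rfl
  obtain ⟨n, rfl⟩ : ∃ n, N = n + 1 := ⟨N - 1, by omega⟩
  have h2 := It_deriv_mult (PP d e q) (by rw [PP_natDegree hd]; omega) (cp q j) n
    (fun i hi hi' => orbit_noncrit he g hq h hj hi (by omega))
  rw [h1, mult_of_deriv _ h2.1, h2.2, derivative_PP]

lemma mult_zero {q : Option (Fin k) → ℂ} (h : ∀ i, q (some i) ≠ 0) : (dP e q).rootMultiplicity 0 = e := by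
  rw [dP, rootMultiplicity_mul ((dP_monic e q).ne_zero)]
  have h1 : (∏ i : Fin k, (X - C (q (some i)))).rootMultiplicity 0 = 0 := by
    apply rootMultiplicity_eq_zero
    rw [IsRoot, eval_prod, Finset.prod_eq_zero_iff]
    rintro ⟨i, -, hi⟩
    simp at hi; exact h i hi
  have h2 : (X ^ e : ℂ[X]).rootMultiplicity 0 = e := by
    have := rootMultiplicity_X_sub_C_pow (0:ℂ) e
    simpa using this
  rw [h1, h2, add_zero]

lemma mult_last {q : Option (Fin (k+1)) → ℂ} (h0 : q (some 0) ≠ 0) (h : ∀ i : Fin k, q (some i.succ) ≠ q (some 0)) :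
    (dP e q).rootMultiplicity (q (some 0)) = 1 := by
  have hne := (dP_monic e q).ne_zero
  rw [dP, Fin.prod_univ_succ] at hne ⊢
  rw [rootMultiplicity_mul hne, rootMultiplicity_mul (right_ne_zero_of_mul hne), rootMultiplicity_X_sub_C_self]
  rw [rootMultiplicity_eq_zero, rootMultiplicity_eq_zero]
  · rw [IsRoot, eval_prod, Finset.prod_eq_zero_iff]
    rintro ⟨i, -, hi⟩
    simp [sub_eq_zero] at hi; exact h i hi.symm
  · simp [IsRoot, h0]

theorem step {A : Set (Option (Fin (k+1)) → ℂ)} (he : 1 ≤ e) (hd : d = e + (k + 1) + 1) (hN : 1 ≤ N) (g : Grow (k + 1) d e R M)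
    (hAs : A ⊆ Om (k + 1) d e N R) (hA : IsOpen A) (hB : IsOpen (Om (k + 1) d e N R \ A)) (hne : A.Nonempty) :
    ∃ q ∈ A, q (some 0) = 0 := by
  classical
  by_contra! hcon
  have hR := g.pos
  have hl := ell_ne d (by omega) N
  have hlp : 0 < ‖ell d N‖ := norm_pos_iff.2 hl
  let S0 : Set (Option (Fin (k+1)) → ℂ) := {q | q ∈ A ∧ FF d e N q none = R ∧ ‖FF d e N q (some 0)‖ = R ∧
    ∀ i : Fin k, FF d e N q (some i.succ) = 0}
  have hle : ∀ q ∈ S0, ∀ j, ‖FF d e N q j‖ ≤ R := by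
    rintro q ⟨h1, h2, h3, h4⟩ (_ | i)
    · rw [h2]; simp [abs_of_pos hR]
    · refine Fin.cases ?_ (fun i => ?_) i
      · rw [h3]
      · rw [h4]; simpa using hR.le
  have hqM : ∀ q ∈ S0, ‖q‖ ≤ M := fun q hq => Om_bd hN g (hAs hq.1)
  have hcpt : IsCompact S0 := by
    refine (compA hN g hAs hB (r := R) (by linarith)).of_isClosed_subset ?_ ?_
    · have heq : S0 = (A ∩ Fv d e N ⁻¹' Metric.closedBall 0 R) ∩ {q | FF d e N q none = R ∧ ‖FF d e N q (some 0)‖ = R ∧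
          ∀ i : Fin k, FF d e N q (some i.succ) = 0} := by
        ext q
        constructor
        · intro hq
          refine ⟨⟨hq.1, ?_⟩, hq.2⟩
          simp only [Set.mem_preimage, mem_closedBall_zero_iff]
          exact (pi_norm_le_iff_of_nonneg hR.le).2 (hle q hq)
        · rintro ⟨h1, h2⟩; exact ⟨h1.1, h2⟩
      rw [heq]
      refine (compA hN g hAs hB (r := R) (by linarith)).isClosed.inter ?_
      refine (isClosed_eq (FF_cont _ _ _ _) continuous_const).inter
        ((isClosed_eq (FF_cont _ _ _ _).norm continuous_const).inter ?_)
      have hset : {q : Option (Fin (k+1)) → ℂ | ∀ i : Fin k, FF d e N q (some i.succ) = 0} = ⋂ i : Fin k, {q | FF d e N q (some i.succ) = 0} := by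
        ext q; simp
      show IsClosed {q : Option (Fin (k+1)) → ℂ | ∀ i : Fin k, FF d e N q (some i.succ) = 0}
      rw [hset]
      exact isClosed_iInter fun i => isClosed_eq (FF_cont _ _ _ _) continuous_const
    · intro q hq
      refine ⟨hq.1, ?_⟩
      simp only [Set.mem_preimage, mem_closedBall_zero_iff]
      exact (pi_norm_le_iff_of_nonneg hR.le).2 (hle q hq)
  have hS0ne : S0.Nonempty := by
    let y : Option (Fin (k+1)) → ℂ := fun j => if j = none ∨ j = some 0 then (R:ℂ) else 0
    obtain ⟨q, hq, hqy⟩ := Fv_surj he hd hN g hAs hA hB hne y (by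
      refine lt_of_le_of_lt ((pi_norm_le_iff_of_nonneg hR.le).2 fun j => ?_) (by linarith : R < 2 * R)
      show ‖(if j = none ∨ j = some 0 then (R:ℂ) else 0)‖ ≤ R
      split_ifs
      · simp [abs_of_pos hR]
      · simpa using hR.le)
    have hj : ∀ j, FF d e N q j = y j := fun j => congr_fun hqy j
    refine ⟨q, hq, by rw [hj]; simp [y], by rw [hj]; simp [y, abs_of_pos hR], fun i => by rw [hj]; simp [y]⟩
  have : CompactSpace S0 := isCompact_iff_compactSpace.1 hcpt
  set D := d ^ N with hDdef
  have hD : 1 ≤ D := Nat.one_le_pow _ _ (by omega)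
  obtain ⟨ρ, hρ, hρD⟩ := exists_rho (div_pos hR hlp) hD
  obtain ⟨lam, hlam⟩ : ∃ lam : S0 × ℂ → ℂ, IsLam D ρ (fun q : S0 => QN d e N q.1) lam :=
    lam_exists hD (fun q : S0 => QN d e N q.1) (fun q => QN_monic hd _) (fun q => QN_natDegree hd _)
      (fun i => (QN_coeff_cont i).comp continuous_subtype_val) hρ
      (fun q z hz => by rw [hρD]; exact QN_crit he hd g (hqM _ q.2) (hle _ q.2) z hz)
  have hcpN : ∀ (q : Option (Fin (k+1)) → ℂ) i i', FF d e N q i ≠ FF d e N q i' → cp q i ≠ cp q i' := by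
    intro q i i' h h'; apply h; unfold FF; rw [h']
  have hx0 : ∀ q ∈ S0, ∀ i, q (some i) ≠ 0 := by
    intro q hq i
    refine Fin.cases ?_ (fun i => ?_) i
    · exact hcon q hq.1
    · refine hcpN q (some i.succ) none ?_
      rw [hq.2.2.2 i, hq.2.1]
      exact_mod_cast hR.ne
  have hxl : ∀ q ∈ S0, ∀ i : Fin k, q (some i.succ) ≠ q (some 0) := by
    intro q hq i
    refine hcpN q (some i.succ) (some 0) ?_
    rw [hq.2.2.2 i]
    intro h
    have := hq.2.2.1
    rw [← h, norm_zero] at this; exact hR.ne this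
  -- multiplicities
  have hm0 : ∀ p : S0, (QN d e N p.1 - C ((R:ℂ) / ell d N)).rootMultiplicity 0 = e + 1 := by
    intro p
    have := QN_mult he hd hN g (hqM _ p.2) (hle _ p.2) (j := none) (by rw [p.2.2.1]; simp [abs_of_pos hR])
    rw [p.2.2.1] at this
    rw [show cp p.1 none = 0 from rfl, mult_zero (hx0 _ p.2)] at this
    exact this
  have hm1 : ∀ p : S0, (QN d e N p.1 - C (FF d e N p.1 (some 0) / ell d N)).rootMultiplicity (p.1 (some 0)) = 2 := by
    intro p
    have := QN_mult he hd hN g (hqM _ p.2) (hle _ p.2) (j := some 0) p.2.2.2.1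
    rw [show cp p.1 (some 0) = p.1 (some 0) from rfl, mult_last (hcon _ p.2.1) (hxl _ p.2)] at this
    exact this
  have hv0 : ‖(R:ℂ) / ell d N‖ = ρ ^ D := by rw [hρD, norm_div]; simp [abs_of_pos hR]
  obtain ⟨p0, hp0⟩ := hS0ne
  obtain ⟨u0, hu1, hu2⟩ := exists_lam (c := fun _ => 0) (v := fun _ => (R:ℂ) / ell d N) hD hρ hlam (fun _ => hv0) (by omega) hm0 ⟨p0, hp0⟩
  have hu0n : ‖u0‖ = ρ := norm_of_pow hD hρ hu1 hv0
  let G : Set S0 := {p | lam (p, u0) = 0}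
  have hG : IsClopen G := by
    constructor
    · refine isClosed_eq (hlam.1.comp_continuous (by fun_prop) (fun p => ⟨trivial, by simpa using hu0n⟩)) continuous_const
    · rw [isOpen_iff_mem_nhds]
      intro p hp
      have h1 := C_open (c := fun _ => 0) (v := fun _ => (R:ℂ) / ell d N) hD hρ hlam continuous_const (fun _ => hv0) hm0 p u0 hu1 hp
      have h2 : Tendsto (fun p' : S0 => (p', u0)) (𝓝 p) (𝓝 (p, u0)) := Continuous.tendsto (by fun_prop) p
      filter_upwards [h2.eventually h1] with p' hp'
      exact hp' hu1
  obtain ⟨p, hpG, -, hpl⟩ := lemE' G hG ⟨⟨p0, hp0⟩, hu2⟩ hD hρ hlam (c := fun p : S0 => p.1 (some 0))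
    (v := fun p : S0 => FF d e N p.1 (some 0) / ell d N) ((continuous_apply (some 0)).comp continuous_subtype_val)
    (((FF_cont _ _ _ _).comp continuous_subtype_val).div_const _)
    (fun p => by rw [hρD, norm_div, p.2.2.2.1]) (by omega) hm1 (by
      intro p U hU
      obtain ⟨V, hV, hVU⟩ := mem_nhds_subtype _ _ _ |>.1 hU
      have h1 := Fv_open he hd hN g (hAs p.2.1) (Filter.inter_mem hV (hA.mem_nhds p.2.1))
      let ψ : ℂ → Option (Fin (k+1)) → ℂ := fun v' => Function.update (Fv d e N p.1) (some 0) (ell d N * v')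
      have hψ : Continuous ψ := continuous_const.update _ (by fun_prop)
      have hψp : ψ (FF d e N p.1 (some 0) / ell d N) = Fv d e N p.1 := by
        simp only [ψ]; rw [mul_div_cancel₀ _ hl]
        exact Function.update_eq_self _ _
      have h2 : ∀ᶠ v' in 𝓝 (FF d e N p.1 (some 0) / ell d N), ψ v' ∈ Fv d e N '' (V ∩ A) := by
        apply hψ.continuousAt.eventually
        rw [hψp]; exact h1
      filter_upwards [mem_nhdsWithin_of_mem_nhds h2, self_mem_nhdsWithin] with v' h3 h4
      obtain ⟨p', ⟨hp'V, hp'A⟩, hp'⟩ := h3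
      have hj : ∀ j, FF d e N p' j = ψ v' j := fun j => congr_fun hp' j
      have hp'S : p' ∈ S0 := by
        refine ⟨hp'A, ?_, ?_, ?_⟩
        · rw [hj]; simp only [ψ]; rw [Function.update_of_ne (by simp)]; exact p.2.2.1
        · rw [hj]; simp only [ψ, Function.update_self]
          rw [mem_sphere_zero_iff_norm, hρD] at h4
          rw [norm_mul, h4]; field_simp
        · intro i
          rw [hj]; simp only [ψ]; rw [Function.update_of_ne (by simp)]; exact p.2.2.2.2 i
      refine ⟨⟨p', hp'S⟩, hVU hp'V, ?_⟩
      simp only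
      rw [hj]; simp only [ψ, Function.update_self]; field_simp) u0 hu0n
  exact hcon p.1 p.2.1 (hpl.symm.trans hpG)

end STEP
end CL

namespace CL
open Polynomial
set_option linter.all false

section BASE
variable {d e n : ℕ} {R M : ℝ}

noncomputable def QB (d e n : ℕ) (q : Option (Fin 0) → ℂ) : ℂ[X] := C (ell d n)⁻¹ * (It (PP d e q) n).comp (X ^ d)

lemma QB_natDegree (hd : d = e + 0 + 1) (q : Option (Fin 0) → ℂ) : (QB d e n q).natDegree = d ^ (n + 1) := by
  rw [QB, natDegree_C_mul (inv_ne_zero (ell_ne d (by omega) n)), natDegree_comp, It_natDegree, PP_natDegree hd]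
  simp [pow_succ]

lemma QB_monic (hd : d = e + 0 + 1) (q : Option (Fin 0) → ℂ) : (QB d e n q).Monic := by
  rw [Monic, QB, leadingCoeff_mul, leadingCoeff_C, leadingCoeff_comp (by simp; omega),
    It_lead _ (PP_natDegree hd q) (by omega) (PP_lead hd q)]
  simp [ell_ne d (by omega) n]

lemma QB_coeff_cont (i : ℕ) : Continuous fun q : Option (Fin 0) → ℂ => (QB d e n q).coeff i := by
  simp only [QB, coeff_C_mul]
  exact continuous_const.mul (It_PP_coeff_cont d e n i _)

lemma QB_deriv_root (he : 1 ≤ e) (hd : d = e + 0 + 1) (q : Option (Fin 0) → ℂ) {y : ℂ}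
    (hy : (derivative ((It (PP d e q) n).comp (X ^ d))).IsRoot y) (h : y = 0 → False) :
    ∃ m j, m ≤ n ∧ 1 ≤ m ∧ ((It (PP d e q) n).comp (X ^ d)).eval y = FF d e m q j := by
  rw [derivative_comp, IsRoot, eval_mul, mul_eq_zero] at hy
  have : (derivative (X ^ d : ℂ[X])).eval y ≠ 0 := by
    rw [derivative_X_pow]; simp only [eval_mul, eval_pow, eval_X, eval_C]
    exact mul_ne_zero (by exact_mod_cast (by omega : d ≠ 0)) (pow_ne_zero _ h)
  have hy := hy.resolve_left this
  rw [eval_comp] at hy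
  obtain ⟨m, j, h1, h2, h3⟩ := crit_orbit he hy
  exact ⟨m, j, h1, h2, by rw [eval_comp]; exact h3⟩

lemma allnone {q : Option (Fin 0) → ℂ} {P : Option (Fin 0) → Prop} (h : P none) : ∀ j, P j := by
  rintro (_ | i)
  · exact h
  · exact i.elim0

lemma QB_crit (he : 1 ≤ e) (hd : d = e + 0 + 1) (g : Grow 0 d e R M) {q : Option (Fin 0) → ℂ} (hq : ‖q‖ ≤ M)
    (h : ∀ j, ‖FF d e (n + 1) q j‖ ≤ R) (z : ℂ)
    (hz : (derivative (QB d e n q)).IsRoot z) : ‖(QB d e n q).eval z‖ ≤ R / ‖ell d n‖ := by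
  rw [QB, derivative_C_mul, IsRoot, eval_mul, eval_C, mul_eq_zero] at hz
  have hz := hz.resolve_left (inv_ne_zero (ell_ne d (by omega) n))
  rw [QB, eval_mul, eval_C, norm_mul, norm_inv, div_eq_inv_mul]
  gcongr
  by_cases h0 : z = 0
  · subst h0
    have : ((It (PP d e q) n).comp (X ^ d)).eval 0 = FF d e n q none := by
      rw [eval_comp, It_eval]; simp only [eval_pow, eval_X]; rw [zero_pow (by omega)]; rfl
    rw [this]; exact FF_le g hq (h none) (by omega)
  · obtain ⟨m, j, h1, h2, h3⟩ := QB_deriv_root he hd q hz h0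
    rw [h3]; exact FF_le g hq (h j) (by omega)

lemma QB_mult (he : 1 ≤ e) (hd : d = e + 0 + 1) (g : Grow 0 d e R M) {q : Option (Fin 0) → ℂ} (hq : ‖q‖ ≤ M)
    (h : ‖FF d e (n + 1) q none‖ = R) :
    (QB d e n q - C (FF d e (n + 1) q none / ell d n)).rootMultiplicity (q none) = 1 := by
  have hR := g.pos
  rw [QB, mult_scale _ (ell_ne d (by omega) n)]
  have h1 : FF d e (n + 1) q none = ((It (PP d e q) n).comp (X ^ d)).eval (q none) := by
    rw [eval_comp, It_eval, FF, Function.iterate_succ_apply]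
    simp only [cp, eval_zero_PP, eval_pow, eval_X]
  have ha : q none ≠ 0 := by
    intro h0
    have : ∀ m, FF d e m q none = 0 := by
      intro m
      induction m with
      | zero => rfl
      | succ m ih => rw [FF_succ, ih, eval_zero_PP, h0, zero_pow (by omega)]
    rw [this, norm_zero] at h; exact hR.ne h
  have hnr : ¬ (derivative ((It (PP d e q) n).comp (X ^ d))).IsRoot (q none) := by
    intro hr
    obtain ⟨m, j, h2, h3, h4⟩ := QB_deriv_root he hd q hr ha
    rw [← h1] at h4
    have h5 : j = none := allnone (q := q) (P := fun j => j = none) rfl j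
    subst h5
    have h6 := FF_lt g hq h.le (show m < n + 1 by omega)
    rw [← h4, h] at h6
    exact lt_irrefl _ h6
  have hne : derivative ((It (PP d e q) n).comp (X ^ d)) ≠ 0 := by
    intro h; apply hnr; rw [h]; simp
  rw [h1, mult_of_deriv _ hne, rootMultiplicity_eq_zero hnr]

lemma base_count {A : Set (Option (Fin 0) → ℂ)} (he : 1 ≤ e) (hd : d = e + 0 + 1) (g : Grow 0 d e R M)
    (hAs : A ⊆ Om 0 d e (n + 1) R) (hA : IsOpen A) (hB : IsOpen (Om 0 d e (n + 1) R \ A)) (hne : A.Nonempty) :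
    ∃ s : Finset ℂ, s.card = d ^ (n + 1) ∧ ∀ a ∈ s, ∃ q ∈ A, q none = a ∧ FF d e (n + 1) q none = R := by
  classical
  have hN : 1 ≤ n + 1 := by omega
  have hR := g.pos
  have hl := ell_ne d (by omega) n
  have hlp : 0 < ‖ell d n‖ := norm_pos_iff.2 hl
  let S0 : Set (Option (Fin 0) → ℂ) := {q | q ∈ A ∧ ‖FF d e (n+1) q none‖ = R}
  have hle : ∀ q ∈ S0, ∀ j, ‖FF d e (n+1) q j‖ ≤ R := by
    intro q hq
    exact allnone (q := q) hq.2.le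
  have hqM : ∀ q ∈ S0, ‖q‖ ≤ M := fun q hq => Om_bd hN g (hAs hq.1)
  have hcpt : IsCompact S0 := by
    have heq : S0 = (A ∩ Fv d e (n+1) ⁻¹' Metric.closedBall 0 R) ∩ {q | ‖FF d e (n+1) q none‖ = R} := by
      ext q
      constructor
      · intro hq
        refine ⟨⟨hq.1, ?_⟩, hq.2⟩
        simp only [Set.mem_preimage, mem_closedBall_zero_iff]
        exact (pi_norm_le_iff_of_nonneg hR.le).2 (hle q hq)
      · rintro ⟨h1, h2⟩; exact ⟨h1.1, h2⟩
    rw [heq]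
    exact (compA hN g hAs hB (r := R) (by linarith)).inter_right (isClosed_eq (FF_cont _ _ _ _).norm continuous_const)
  have hS0ne : S0.Nonempty := by
    obtain ⟨q, hq, hqy⟩ := Fv_surj he hd hN g hAs hA hB hne (fun _ => (R:ℂ)) (by
      refine lt_of_le_of_lt ((pi_norm_le_iff_of_nonneg hR.le).2 fun j => ?_) (by linarith : R < 2 * R)
      simp [abs_of_pos hR])
    have hj : FF d e (n+1) q none = R := congr_fun hqy none
    exact ⟨q, hq, by rw [hj]; simp [abs_of_pos hR]⟩
  have : CompactSpace S0 := isCompact_iff_compactSpace.1 hcpt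
  have : Nonempty S0 := hS0ne.to_subtype
  set D := d ^ (n + 1) with hDdef
  have hD : 1 ≤ D := Nat.one_le_pow _ _ (by omega)
  obtain ⟨ρ, hρ, hρD⟩ := exists_rho (div_pos hR hlp) hD
  obtain ⟨lam, hlam⟩ : ∃ lam : S0 × ℂ → ℂ, IsLam D ρ (fun q : S0 => QB d e n q.1) lam :=
    lam_exists hD (fun q : S0 => QB d e n q.1) (fun q => QB_monic hd _) (fun q => QB_natDegree hd _)
      (fun i => (QB_coeff_cont i).comp continuous_subtype_val) hρ
      (fun q z hz => by rw [hρD]; exact QB_crit he hd g (hqM _ q.2) (hle _ q.2) z hz)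
  have hm : ∀ p : S0, (QB d e n p.1 - C (FF d e (n+1) p.1 none / ell d n)).rootMultiplicity (p.1 none) = 1 :=
    fun p => QB_mult he hd g (hqM _ p.2) p.2.2
  have hv : ∀ p : S0, ‖FF d e (n+1) p.1 none / ell d n‖ = ρ ^ D := fun p => by rw [hρD, norm_div, p.2.2]
  have key := lemE hD hρ hlam (c := fun p : S0 => p.1 none)
    (v := fun p : S0 => FF d e (n+1) p.1 none / ell d n) ((continuous_apply none).comp continuous_subtype_val)
    (((FF_cont _ _ _ _).comp continuous_subtype_val).div_const _)
    hv le_rfl hm (by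
      intro p U hU
      obtain ⟨V, hV, hVU⟩ := mem_nhds_subtype _ _ _ |>.1 hU
      have h1 := Fv_open he hd hN g (hAs p.2.1) (Filter.inter_mem hV (hA.mem_nhds p.2.1))
      let ψ : ℂ → Option (Fin 0) → ℂ := fun v' => fun _ => (ell d n * v')
      have hψ : Continuous ψ := continuous_pi fun _ => by fun_prop
      have hψp : ψ (FF d e (n+1) p.1 none / ell d n) = Fv d e (n+1) p.1 := by
        funext j
        refine allnone (q := p.1) (P := fun j => ψ (FF d e (n+1) p.1 none / ell d n) j = Fv d e (n+1) p.1 j) ?_ j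
        simp only [ψ]; rw [mul_div_cancel₀ _ hl]; rfl
      have h2 : ∀ᶠ v' in 𝓝 (FF d e (n+1) p.1 none / ell d n), ψ v' ∈ Fv d e (n+1) '' (V ∩ A) := by
        apply hψ.continuousAt.eventually
        rw [hψp]; exact h1
      filter_upwards [mem_nhdsWithin_of_mem_nhds h2, self_mem_nhdsWithin] with v' h3 h4
      obtain ⟨p', ⟨hp'V, hp'A⟩, hp'⟩ := h3
      have hj : FF d e (n+1) p' none = ell d n * v' := congr_fun hp' none
      have hp'S : p' ∈ S0 := by
        refine ⟨hp'A, ?_⟩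
        rw [hj]
        rw [mem_sphere_zero_iff_norm, hρD] at h4
        rw [norm_mul, h4]; field_simp
      refine ⟨⟨p', hp'S⟩, hVU hp'V, ?_⟩
      simp only
      rw [hj]; field_simp)
  obtain ⟨w1, hw1⟩ := exists_pow hD ((R:ℂ) / ell d n)
  have hv0 : ‖(R:ℂ) / ell d n‖ = ρ ^ D := by rw [hρD, norm_div]; simp [abs_of_pos hR]
  have hw1n : ‖w1‖ = ρ := norm_of_pow hD hρ hw1 hv0
  have hη : ∀ η ∈ nthRootsFinset D (1:ℂ), η ^ D = 1 := fun η h => (mem_nthRootsFinset (by omega) _).1 h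
  have hex : ∀ η : ℂ, ∃ p : S0, η ∈ nthRootsFinset D (1:ℂ) → FF d e (n+1) p.1 none / ell d n = (R:ℂ) / ell d n ∧ lam (p, η * w1) = p.1 none := by
    intro η
    by_cases h : η ∈ nthRootsFinset D (1:ℂ)
    · obtain ⟨p, h1, h2⟩ := key (η * w1) (by
        rw [norm_mul, Complex.norm_eq_one_of_pow_eq_one (hη η h) (by omega), one_mul, hw1n])
      refine ⟨p, fun _ => ⟨?_, h2⟩⟩
      rw [h1, mul_pow, hη η h, one_mul, hw1]
    · exact ⟨Classical.arbitrary _, fun h' => absurd h' h⟩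
  choose p hp using hex
  refine ⟨(nthRootsFinset D (1:ℂ)).image (fun η => (p η).1 none), ?_, ?_⟩
  · rw [Finset.card_image_of_injOn, (Complex.isPrimitiveRoot_exp D (by omega)).card_nthRootsFinset]
    intro η hη1 η' hη2 heq
    have h1 := hp η hη1
    have h2 := hp η' hη2
    have hpe : p η = p η' := by
      apply Subtype.ext
      funext j
      exact allnone (q := (p η).1) (P := fun j => (p η).1 j = (p η').1 j) heq j
    rw [← hpe] at h2
    have hc := lam_count hlam (p η) w1 hw1n ((p η).1 none)
    rw [hw1, ← h1.1, hm] at hc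
    exact Finset.card_le_one.1 hc.le _ (Finset.mem_filter.2 ⟨hη1, h1.2⟩) _ (Finset.mem_filter.2 ⟨hη2, h2.2⟩)
  · intro a ha
    obtain ⟨η, hη1, rfl⟩ := Finset.mem_image.1 ha
    refine ⟨(p η).1, (p η).2.1, rfl, ?_⟩
    have := (hp η hη1).1
    field_simp at this
    exact this

lemma PP_base {B : Type*} [CommRing B] [Algebra ℂ B] [Nontrivial B] (hd : d = e + 0 + 1) (q : Option (Fin 0) → B) (z : B) :
    (PP d e q).eval z = algebraMap ℂ B (d:ℂ)⁻¹ * z ^ d + q none ^ d := by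
  have h := PP_zero (A := B) (k := 0) hd
  have h2 : PP d e q = PP d e (fun _ : Option (Fin 0) => (0:B)) + C (q none ^ d) := by
    simp only [PP, dP]
    simp [zero_pow (show d ≠ 0 by omega)]
  rw [h2, h]; simp

lemma FF_base_deg (hd : d = e + 0 + 1) (m : ℕ) :
    (FF d e m (fun _ : Option (Fin 0) => (X : ℂ[X])) none).natDegree ≤ d ^ m := by
  induction m with
  | zero => simp [FF, cp]
  | succ m ih =>
    rw [FF, Function.iterate_succ_apply']
    change ((PP d e _).eval (FF d e m (fun _ : Option (Fin 0) => (X : ℂ[X])) none)).natDegree ≤ _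
    rw [PP_base hd]
    apply natDegree_add_le_of_degree_le
    · refine natDegree_mul_le.trans ?_
      rw [algebraMap_eq, natDegree_C, zero_add]
      refine natDegree_pow_le.trans ?_
      rw [pow_succ, mul_comm]; gcongr
    · rw [natDegree_X_pow]
      exact Nat.le_self_pow (by omega) d

theorem base {A : Set (Option (Fin 0) → ℂ)} (he : 1 ≤ e) (hd : d = e + 0 + 1) (g : Grow 0 d e R M)
    (hAs : A ⊆ Om 0 d e (n + 1) R) (hA : IsOpen A) (hB : IsOpen (Om 0 d e (n + 1) R \ A)) (hne : A.Nonempty)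
    (hne' : (Om 0 d e (n + 1) R \ A).Nonempty) : False := by
  classical
  obtain ⟨s, hs, hs'⟩ := base_count he hd g hAs hA hB hne
  obtain ⟨t, ht, ht'⟩ := base_count he hd g Set.diff_subset hB (by
    rw [Set.diff_diff_cancel_left hAs]; exact hA) hne'
  have hdis : Disjoint s t := by
    rw [Finset.disjoint_left]
    intro a ha ha'
    obtain ⟨q, h1, h2, -⟩ := hs' a ha
    obtain ⟨q', h1', h2', -⟩ := ht' a ha'
    have : q = q' := by
      funext j
      exact allnone (q := q) (P := fun j => q j = q' j) (h2.trans h2'.symm) j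
    subst this
    exact h1'.2 h1
  let f : ℂ[X] := FF d e (n+1) (fun _ : Option (Fin 0) => (X : ℂ[X])) none - C (R:ℂ)
  have hfe : ∀ q : Option (Fin 0) → ℂ, f.eval (q none) = FF d e (n+1) q none - R := by
    intro q
    have h1 := FF_map (aeval (q none) : ℂ[X] →ₐ[ℂ] ℂ) d e (n+1) (fun _ : Option (Fin 0) => (X : ℂ[X])) none
    have h2 : (⇑(aeval (q none) : ℂ[X] →ₐ[ℂ] ℂ) ∘ fun _ : Option (Fin 0) => (X : ℂ[X])) = q := by
      funext j
      refine allnone (q := q) (P := fun j => _ = q j) ?_ j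
      simp
    rw [h2, coe_aeval_eq_eval] at h1
    simp only [f, eval_sub, eval_C, h1]
  have hf0 : f ≠ 0 := by
    intro h
    have h1 := hfe (fun _ => 0)
    rw [h] at h1
    have : ∀ m, FF d e m (fun _ : Option (Fin 0) => (0:ℂ)) none = 0 := by
      intro m
      induction m with
      | zero => rfl
      | succ m ih => rw [FF_succ, ih, eval_zero_PP, zero_pow (by omega)]
    rw [this] at h1
    simp at h1
    exact g.pos.ne' h1
  have hdeg : f.natDegree ≤ d ^ (n + 1) := by
    simp only [f]
    rw [natDegree_sub_C]
    exact FF_base_deg hd _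
  have hsub : s ∪ t ⊆ f.roots.toFinset := by
    intro a ha
    rw [Multiset.mem_toFinset, mem_roots hf0]
    have : ∃ q : Option (Fin 0) → ℂ, q none = a ∧ FF d e (n+1) q none = R := by
      rcases Finset.mem_union.1 ha with h | h
      · obtain ⟨q, -, h⟩ := hs' a h; exact ⟨q, h⟩
      · obtain ⟨q, -, h⟩ := ht' a h; exact ⟨q, h⟩
    obtain ⟨q, rfl, h⟩ := this
    rw [IsRoot, hfe, h, sub_self]
  have hc := Finset.card_le_card hsub
  rw [Finset.card_union_of_disjoint hdis, hs, ht] at hc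
  have h1 := Multiset.toFinset_card_le f.roots
  have h2 := card_roots' f
  have h3 : 0 < d ^ (n + 1) := pow_pos (by omega) _
  omega

theorem OmPre : ∀ (k d e N : ℕ) (R M : ℝ), 1 ≤ e → d = e + k + 1 → 1 ≤ N → Grow k d e R M →
    ∀ A ⊆ Om k d e N R, IsOpen A → IsOpen (Om k d e N R \ A) → A.Nonempty → (Om k d e N R \ A).Nonempty → False := by
  intro k
  induction k with
  | zero =>
    intro d e N R M he hd hN g A hAs hA hB hne hne'
    obtain ⟨n, rfl⟩ : ∃ n, N = n + 1 := ⟨N - 1, by omega⟩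
    exact base he hd g hAs hA hB hne hne'
  | succ k ih =>
    intro d e N R M he hd hN g A hAs hA hB hne hne'
    have hiff : ∀ q : Option (Fin k) → ℂ, ext0 q ∈ Om (k+1) d e N R ↔ q ∈ Om k d (e+1) N R := by
      intro q
      rw [mem_Om g.pos, mem_Om g.pos]
      obtain ⟨h1, h2, h3⟩ := FF_ext0 d e N q
      constructor
      · rintro h (_ | i)
        · rw [← h1]; exact h _
        · rw [← h3]; exact h _
      · rintro h (_ | i)
        · rw [h1]; exact h _
        · refine Fin.cases ?_ (fun i => ?_) i
          · rw [h2]; exact h _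
          · rw [h3]; exact h _
    have hlift : ∀ q : Option (Fin (k+1)) → ℂ, q (some 0) = 0 → ∃ q', ext0 q' = q := by
      intro q hq
      refine ⟨fun j => match j with | none => q none | some i => q (some i.succ), ?_⟩
      funext j
      rcases j with _ | i
      · rfl
      · refine Fin.cases ?_ (fun i => ?_) i
        · exact hq.symm
        · rfl
    have hcompl : ext0 ⁻¹' (Om (k+1) d e N R \ A) = Om k d (e+1) N R \ ext0 ⁻¹' A := by
      ext q
      simp only [Set.mem_preimage, Set.mem_diff, hiff]
    refine ih d (e+1) N R M (by omega) (by omega) hN g.down (ext0 ⁻¹' A) (fun q hq => (hiff q).1 (hAs hq))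
      (hA.preimage ext0_cont) (by rw [← hcompl]; exact hB.preimage ext0_cont) ?_ ?_
    · obtain ⟨q, hq, h0⟩ := step he hd hN g hAs hA hB hne
      obtain ⟨q', rfl⟩ := hlift q h0
      exact ⟨q', hq⟩
    · rw [← hcompl]
      obtain ⟨q, hq, h0⟩ := step he hd hN g Set.diff_subset hB (by
        rw [Set.diff_diff_cancel_left hAs]; exact hA) hne'
      obtain ⟨q', rfl⟩ := hlift q h0
      exact ⟨q', hq⟩

end BASE
end CL
namespace CL
open Polynomial
set_option linter.all false

theorem grow_exists_bd {k d e : ℕ} (he : 1 ≤ e) (hd : d = e + k + 1) : ∃ R M, Grow k d e R M ∧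
    ∀ q : Option (Fin k) → ℂ, (∀ j, ∃ B, ∀ n, ‖FF d e n q j‖ ≤ B) → ‖q‖ ≤ M := by
  obtain ⟨R, M, g⟩ := grow_exists (k := k) he hd
  obtain ⟨δ, hδ, hdel⟩ := grow_delta (k := k) he hd
  obtain ⟨K, hK, hesc⟩ := grow_K (k := k) he hd
  obtain ⟨M1, hM1⟩ : ∃ M1 : ℝ, M1 = max 1 (max M (2 * K / δ)) := ⟨_, rfl⟩
  have a1 : 1 ≤ M1 := by rw [hM1]; exact le_max_left _ _
  have a2 : M ≤ M1 := by rw [hM1]; exact (le_max_left _ _).trans (le_max_right _ _)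
  have a3 : 2 * K / δ ≤ M1 := by rw [hM1]; exact (le_max_right _ _).trans (le_max_right _ _)
  have key : ∀ q : Option (Fin k) → ℂ, M1 < ‖q‖ → ∃ j, ∀ n : ℕ, 2 ^ n * (2 * K * ‖q‖) ≤ ‖FF d e (n + 1) q j‖ := by
    intro q hcon
    obtain ⟨j, hj⟩ := hdel q
    have hM : 1 ≤ ‖q‖ := by linarith
    have h1 : 2 * K * ‖q‖ ≤ δ * ‖q‖ ^ d := by
      obtain ⟨m, rfl⟩ : ∃ m, d = m + 2 := ⟨d - 2, by omega⟩
      have h4 : ‖q‖ * ‖q‖ ≤ ‖q‖ ^ (m + 2) := by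
        rw [pow_add, sq]
        have := one_le_pow₀ (n := m) hM
        nlinarith [mul_pos (by linarith : 0 < ‖q‖) (by linarith : 0 < ‖q‖)]
      rw [div_le_iff₀ hδ] at a3
      have h5 : 2 * K ≤ ‖q‖ * δ := a3.trans (by gcongr)
      calc 2 * K * ‖q‖ ≤ (‖q‖ * δ) * ‖q‖ := by gcongr
        _ = δ * (‖q‖ * ‖q‖) := by ring
        _ ≤ _ := by gcongr
    refine ⟨j, fun n => ?_⟩
    induction n with
    | zero => simpa using h1.trans hj
    | succ n ih =>
      rw [FF_succ]
      have hp : (1:ℝ) ≤ 2 ^ n := one_le_pow₀ (by norm_num)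
      have hKq : 0 < K * ‖q‖ := by positivity
      have := hesc q (FF d e (n + 1) q j) ‖q‖ hM le_rfl (by nlinarith)
      rw [pow_succ]; linarith
  refine ⟨K * M1, M1, ⟨by positivity, ?_, fun q z hq hz => hesc q z M1 a1 hq hz⟩, ?_⟩
  · intro N hN q hq
    by_contra! hcon
    obtain ⟨j, h2⟩ := key q hcon
    have h3 := h2 (N - 1)
    rw [Nat.sub_add_cancel hN] at h3
    have h4 := hq j
    have hp : (1:ℝ) ≤ 2 ^ (N - 1) := one_le_pow₀ (by norm_num)
    have hKq : 0 < K * ‖q‖ := by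
      have : 0 < ‖q‖ := by linarith
      positivity
    have : K * M1 < K * ‖q‖ := by gcongr
    nlinarith
  · intro q hq
    by_contra! hcon
    obtain ⟨j, h2⟩ := key q hcon
    obtain ⟨B, hB⟩ := hq j
    obtain ⟨n, hn⟩ := pow_unbounded_of_one_lt B (show (1:ℝ) < 2 by norm_num)
    have h3 := h2 n
    have h4 := hB (n + 1)
    have hKq : 1 ≤ K * ‖q‖ := by nlinarith
    have hp : (1:ℝ) ≤ 2 ^ n := one_le_pow₀ (by norm_num)
    nlinarith

def CC (k d e : ℕ) : Set (Option (Fin k) → ℂ) := {q | ∀ j, ∃ B, ∀ n, ‖FF d e n q j‖ ≤ B}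

lemma bdd_le {k d e : ℕ} {R M : ℝ} (g : Grow k d e R M) {q : Option (Fin k) → ℂ} (hq : ‖q‖ ≤ M) {j} {B : ℝ}
    (hB : ∀ n, ‖FF d e n q j‖ ≤ B) (m : ℕ) : ‖FF d e m q j‖ ≤ R := by
  by_contra! hcon
  have h : ∀ n : ℕ, 2 ^ n * R ≤ ‖FF d e (m + n) q j‖ := by
    intro n
    induction n with
    | zero => simpa using hcon.le
    | succ n ih =>
      have hp : (1:ℝ) ≤ 2 ^ n := one_le_pow₀ (by norm_num)
      have := g.esc q (FF d e (m + n) q j) hq (by nlinarith [g.pos])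
      rw [← add_assoc, FF_succ, pow_succ]; linarith
  obtain ⟨n, hn⟩ := pow_unbounded_of_one_lt (B / R) (show (1:ℝ) < 2 by norm_num)
  rw [div_lt_iff₀ g.pos] at hn
  linarith [h n, hB (m + n)]

def KK (k d e : ℕ) (R M : ℝ) (N : ℕ) : Set (Option (Fin k) → ℂ) :=
  {q | ‖q‖ ≤ M ∧ ‖Fv d e (N + 1) q‖ ≤ R}

lemma KK_compact (k d e : ℕ) (R M : ℝ) (N : ℕ) : IsCompact (KK k d e R M N) := by
  apply (isCompact_closedBall (0 : Option (Fin k) → ℂ) M).of_isClosed_subset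
  · exact (isClosed_le continuous_norm continuous_const).inter
      (isClosed_le (Fv_cont d e (N+1)).norm continuous_const)
  · rintro q ⟨h, -⟩; simpa using h

lemma mem_KK {k d e : ℕ} {R M : ℝ} (hR : 0 < R) {N : ℕ} {q : Option (Fin k) → ℂ} :
    q ∈ KK k d e R M N ↔ ‖q‖ ≤ M ∧ ∀ j, ‖FF d e (N+1) q j‖ ≤ R := by
  rw [KK, Set.mem_setOf_eq, pi_norm_le_iff_of_nonneg hR.le]; rfl

lemma KK_anti {k d e : ℕ} {R M : ℝ} (g : Grow k d e R M) : Antitone (KK k d e R M) := by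
  intro m n hmn q hq
  rw [mem_KK g.pos] at hq ⊢
  exact ⟨hq.1, fun j => FF_le g hq.1 (hq.2 j) (by omega)⟩

lemma CC_eq {k d e : ℕ} {R M : ℝ} (g : Grow k d e R M)
    (hb : ∀ q : Option (Fin k) → ℂ, (∀ j, ∃ B, ∀ n, ‖FF d e n q j‖ ≤ B) → ‖q‖ ≤ M) :
    CC k d e = ⋂ N, KK k d e R M N := by
  ext q
  simp only [Set.mem_iInter, mem_KK g.pos]
  constructor
  · intro h N
    have hq := hb q h
    refine ⟨hq, fun j => ?_⟩
    obtain ⟨B, hB⟩ := h j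
    exact bdd_le g hq hB _
  · intro h j
    exact ⟨R, fun n => FF_le g (h n).1 ((h n).2 j) (by omega)⟩

lemma zero_CC {k d e : ℕ} (hd : d = e + k + 1) : (0 : Option (Fin k) → ℂ) ∈ CC k d e := by
  intro j
  refine ⟨0, fun n => ?_⟩
  have : ∀ m, FF d e m (0 : Option (Fin k) → ℂ) j = 0 := by
    intro m
    induction m with
    | zero => cases j <;> rfl
    | succ m ih => rw [FF_succ, ih, eval_zero_PP]; simp; omega
  rw [this]; simp

theorem CC_main {k d e : ℕ} (he : 1 ≤ e) (hd : d = e + k + 1) :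
    IsCompact (CC k d e) ∧ IsConnected (CC k d e) := by
  obtain ⟨R, M, g, hb⟩ := grow_exists_bd (k := k) he hd
  have heq := CC_eq g hb
  have hcl : ∀ N, IsClosed (KK k d e R M N) := fun N => (KK_compact k d e R M N).isClosed
  have hcomp : IsCompact (CC k d e) := by
    rw [heq]
    exact (KK_compact k d e R M 0).of_isClosed_subset (isClosed_iInter hcl) (Set.iInter_subset _ 0)
  refine ⟨hcomp, ⟨0, zero_CC hd⟩, ?_⟩
  rw [isPreconnected_iff_subset_of_disjoint_closed]
  intro S T hS hT hST hdis
  by_contra! hcon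
  obtain ⟨h1, h2⟩ := hcon
  have hdj : Disjoint (CC k d e ∩ S) (CC k d e ∩ T) := by
    rw [Set.disjoint_iff_inter_eq_empty, ← Set.inter_inter_distrib_left, hdis]
  obtain ⟨U, V, hU, hV, hSU, hTV, hUV⟩ :=
    SeparatedNhds.of_isCompact_isCompact (hcomp.inter_right hS) (hcomp.inter_right hT) hdj
  have hsub : ⋂ N, KK k d e R M N ⊆ U ∪ V := by
    rw [← heq]
    intro q hq
    rcases hST hq with h | h
    · left; exact hSU ⟨hq, h⟩
    · right; exact hTV ⟨hq, h⟩
  obtain ⟨N, hN⟩ := exists_subset_nhds_of_isCompact' (KK_anti g).directed_ge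
    (fun N => KK_compact k d e R M N) hcl (U := U ∪ V) (fun x hx => (hU.union hV).mem_nhds (hsub hx))
  have hOK : Om k d e (N + 2) R ⊆ U ∪ V := by
    intro q hq
    apply hN
    have hqM := Om_bd (by omega) g hq
    rw [mem_Om g.pos] at hq
    rw [mem_KK g.pos]
    refine ⟨hqM, fun j => ?_⟩
    by_contra! hc
    have h3 := g.esc q _ hqM hc.le
    rw [← FF_succ] at h3
    linarith [hq j]
  have hCO : CC k d e ⊆ Om k d e (N + 2) R := by
    intro q hq
    rw [heq, Set.mem_iInter] at hq
    have := (mem_KK g.pos).1 (hq (N+1))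
    rw [mem_Om g.pos]
    intro j
    linarith [this.2 j, g.pos]
  have hdiff : Om k d e (N + 2) R \ (Om k d e (N + 2) R ∩ U) = Om k d e (N + 2) R ∩ V := by
    ext q
    constructor
    · rintro ⟨h, h'⟩
      refine ⟨h, ?_⟩
      rcases hOK h with h3 | h3
      · exact absurd ⟨h, h3⟩ h'
      · exact h3
    · rintro ⟨h, h'⟩
      exact ⟨h, fun h3 => Set.disjoint_left.1 hUV h3.2 h'⟩
  refine OmPre k d e (N + 2) R M he hd (by omega) g (Om k d e (N + 2) R ∩ U) Set.inter_subset_left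
    ((Om_open d e _ R).inter hU) ?_ ?_ ?_
  · rw [hdiff]; exact (Om_open d e _ R).inter hV
  · obtain ⟨q, hq, hqT⟩ := Set.not_subset.1 h2
    exact ⟨q, hCO hq, hSU ⟨hq, (hST hq).resolve_right hqT⟩⟩
  · rw [hdiff]
    obtain ⟨q, hq, hqS⟩ := Set.not_subset.1 h1
    exact ⟨q, hCO hq, hTV ⟨hq, (hST hq).resolve_left hqS⟩⟩

lemma PP_coeff_two {k d : ℕ} (hd : d = 1 + k + 1) (q : Option (Fin k) → ℂ) (m : ℕ) (hm : m ≤ k) :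
    (PP d 1 q).coeff (m + 2) = (-1) ^ (k - m) * sigmaE (fun i => q (some i)) (k - m) / ((m + 2 : ℕ) : ℂ) := by
  have h1 : (∏ i : Fin k, (X - C (q (some i)))) =
      ((Multiset.map (fun i => q (some i)) (Finset.univ : Finset (Fin k)).val).map fun t => X - C t).prod := by
    rw [Multiset.map_map]; rfl
  have hc : (Multiset.map (fun i => q (some i)) (Finset.univ : Finset (Fin k)).val).card = k := by simp
  rw [PP, coeff_add, antider_coeff_succ, dP, pow_one, coeff_X_mul, h1, Multiset.prod_X_sub_C_coeff _ (by rw [hc]; exact hm), hc,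
    coeff_C_succ, add_zero, sigmaE, div_eq_mul_inv]
  congr 2
  push_cast; simp; ring

lemma PP_eval_eq {d k : ℕ} (hk : d = k + 2) (q : Option (Fin k) → ℂ) (z : ℂ) :
    (PP d 1 q).eval z = z ^ d / (d : ℂ) +
    (∑ j ∈ Finset.Icc 2 (d - 1), (-1 : ℂ) ^ (d - j) * sigmaE (fun i => q (some i)) (d - j) * z ^ j / (j : ℂ)) +
    q none ^ d := by
  have hd : d = 1 + k + 1 := by omega
  have h0 : (PP d 1 q).coeff 0 = q none ^ d := by rw [coeff_zero_eq_eval_zero, eval_zero_PP]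
  have h1 : (PP d 1 q).coeff 1 = 0 := by
    have h := antider_coeff_succ (dP 1 q) 0
    rw [PP, coeff_add, h, dP, pow_one, coeff_X_mul_zero, coeff_C, if_neg one_ne_zero]; simp
  rw [eval_eq_sum_range, PP_natDegree hd]
  subst hk
  rw [Finset.sum_range_succ', Finset.sum_range_succ', Finset.sum_range_succ, zero_add, h0, h1,
    PP_coeff_two hd q k le_rfl]
  have hs : Finset.Icc 2 (k + 2 - 1) = Finset.Ico (0 + 2) (k + 2) := by
    ext j; simp only [Finset.mem_Icc, Finset.mem_Ico]; omega
  rw [hs, ← Finset.sum_Ico_add', Nat.Ico_zero_eq_range]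
  have : ∀ m ∈ Finset.range k, (PP (k + 2) 1 q).coeff (m + 1 + 1) * z ^ (m + 1 + 1) =
      (-1 : ℂ) ^ (k + 2 - (m + 2)) * sigmaE (fun i => q (some i)) (k + 2 - (m + 2)) * z ^ (m + 2) / ((m + 2 : ℕ) : ℂ) := by
    intro m hm
    rw [PP_coeff_two hd q m (Finset.mem_range.1 hm).le, show k + 2 - (m + 2) = k - m by omega]
    ring
  rw [Finset.sum_congr rfl this]
  simp [sigmaE, Multiset.esymm]
  ring

def toPair (k : ℕ) (q : Option (Fin k) → ℂ) : (Fin k → ℂ) × ℂ := (fun i => q (some i), q none)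

lemma toPair_cont (k : ℕ) : Continuous (toPair k) := by unfold toPair; fun_prop

lemma bounded_iff (d : ℕ) (hd : 3 ≤ d) (q : Option (Fin (d - 2)) → ℂ) (j : Option (Fin (d - 2))) :
    boundedOrbit d (toPair _ q).1 (toPair _ q).2 (cp q j) ↔ ∃ B, ∀ n, ‖FF d 1 n q j‖ ≤ B := by
  have h : Pca d (toPair _ q).1 (toPair _ q).2 = fun z => (PP d 1 q).eval z := by
    funext z; rw [PP_eval_eq (by omega : d = (d - 2) + 2)]; rfl
  rw [boundedOrbit, h, isBounded_iff_forall_norm_le]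
  simp only [Set.forall_mem_range]; rfl

lemma mem_conn (d : ℕ) (hd : 3 ≤ d) (q : Option (Fin (d - 2)) → ℂ) :
    toPair _ q ∈ connLocus d ↔ q ∈ CC (d - 2) d 1 := by
  constructor
  · rintro h (_ | i)
    · rw [← bounded_iff d hd q none]
      have := h ⟨0, by omega⟩
      simpa [critPt, cp] using this
    · rw [← bounded_iff d hd q (some i)]
      have := h ⟨i + 1, by omega⟩
      simpa [critPt, cp, toPair] using this
  · intro h i
    by_cases hi : (i : ℕ) = 0
    · have := (bounded_iff d hd q none).2 (h none)
      simpa [critPt, cp, hi] using this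
    · have := (bounded_iff d hd q (some ⟨i - 1, by omega⟩)).2 (h _)
      simpa [critPt, cp, hi, toPair] using this

lemma conn_eq (d : ℕ) (hd : 3 ≤ d) : connLocus d = toPair (d - 2) '' CC (d - 2) d 1 := by
  ext p
  constructor
  · intro hp
    let q : Option (Fin (d - 2)) → ℂ := fun j => j.elim p.2 p.1
    have hq : toPair _ q = p := rfl
    exact ⟨q, (mem_conn d hd q).1 (hq ▸ hp), hq⟩
  · rintro ⟨q, hq, rfl⟩
    exact (mem_conn d hd q).2 hq

end CL

/-- The connectedness locus `C_d` is a compact connected subset of `ℂ^{d-1}`. -/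
theorem stmt4 (d : ℕ) (hd : 3 ≤ d) :
    IsCompact (connLocus d) ∧ IsConnected (connLocus d) := by
  obtain ⟨h1, h2⟩ := CL.CC_main (k := d - 2) (d := d) (e := 1) le_rfl (by omega)
  rw [CL.conn_eq d hd]
  exact ⟨h1.image (CL.toPair_cont _), h2.image _ (CL.toPair_cont _).continuousOn⟩
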